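/- arXiv:0803.3689 — 4 statements merged into one kernel-verified Lean document; each statement's English description precedes it below -/
import Mathlib

section
/- For a finitely generated graded Λ-module M and a finitely generated graded Γ-module N, there is an isomorphism of (A ⊕ B)-graded algebras End_{Λ ⊗_k^t Γ}(M ⊗_k^t N) ≅ End_Λ(M) ⊗_k^t End_Γ(N), where the endomorphism rings are graded by degree of homomorphisms. -/
open TensorProduct

section untw
variable {k R P Q V : Type} [Field k] [Ring R] [Algebra k R] [AddCommGroup P] [Module R P]
  [AddCommGroup Q] [Module k Q] [Module R Q] [IsScalarTower k R Q] [SMulCommClass R k Q]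
  [AddCommGroup V] [Module k V]

noncomputable def kap : ((P →ₗ[R] Q) ⊗[k] V) →ₗ[k] (P →ₗ[R] (Q ⊗[k] V)) :=
  TensorProduct.lift (LinearMap.mk₂ k
    (fun φ v => ((TensorProduct.AlgebraTensorModule.mk k R Q V).flip v) ∘ₗ φ)
    (by intros; ext; simp [add_tmul]) (by intros; ext; simp [smul_tmul'])
    (by intros; ext; simp [tmul_add]) (by intros; ext; simp))

lemma kap_tmul (φ : P →ₗ[R] Q) (v : V) (p : P) : kap (k := k) (φ ⊗ₜ v) p = φ p ⊗ₜ v := by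
  simp [kap]

lemma kap_inj : Function.Injective (kap (k := k) (R := R) (P := P) (Q := Q) (V := V)) := by
  rw [injective_iff_map_eq_zero]
  intro z hz
  classical
  let b := Module.Basis.ofVectorSpace k V
  have key : ∀ (z : (P →ₗ[R] Q) ⊗[k] V) (i) (p : P),
      TensorProduct.equivFinsuppOfBasisRight b (kap z p) i =
        TensorProduct.equivFinsuppOfBasisRight b z i p := by
    intro z i p
    induction z with
    | zero => simp
    | add x y hx hy => simp [hx, hy]
    | tmul φ v => simp [kap_tmul]
  apply (TensorProduct.equivFinsuppOfBasisRight (M := P →ₗ[R] Q) b).injective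
  ext i p
  rw [← key, hz]; simp

lemma kap_surj [Module.Finite R P] :
    Function.Surjective (kap (k := k) (R := R) (P := P) (Q := Q) (V := V)) := by
  intro F
  classical
  let b := Module.Basis.ofVectorSpace k V
  let E := TensorProduct.equivFinsuppOfBasisRight (M := Q) b
  have hE : ∀ (r : R) (x : Q ⊗[k] V) i, E (r • x) i = r • E x i := by
    intro r x i
    induction x with
    | zero => simp
    | add x y hx hy => simp [smul_add, hx, hy]
    | tmul q v => simp [E, smul_tmul', smul_comm r]
  let c : ∀ i, P →ₗ[R] Q := fun i =>
    { toFun := fun p => E (F p) i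
      map_add' := by intros; simp
      map_smul' := by intros; simp [hE] }
  obtain ⟨s, hs⟩ := Module.Finite.fg_top (R := R) (M := P)
  let I := s.biUnion (fun p => (E (F p)).support)
  have hc : ∀ i, i ∉ I → c i = 0 := by
    intro i hi
    apply LinearMap.ext_on hs
    intro p hp
    simp only [I, Finset.mem_biUnion, not_exists, not_and] at hi
    simpa [c] using hi p hp
  refine ⟨∑ i ∈ I, c i ⊗ₜ b i, ?_⟩
  ext p
  apply E.injective
  ext i
  simp only [map_sum, LinearMap.sum_apply, kap_tmul, Finsupp.finsetSum_apply]
  have : ∀ j, E (c j p ⊗ₜ b j) i = if j = i then c i p else 0 := by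
    intro j
    by_cases h : j = i
    · subst h; simp [E]
    · simp [E, h, Finsupp.single_apply]
  simp only [this]
  rw [Finset.sum_ite_eq' I i]
  split_ifs with h
  · rfl
  · have := congrArg (fun f => f p) (hc i h)
    simpa [c] using this.symm
end untw

section untw2
variable {k Λ Γ M N : Type} [Field k] [Ring Λ] [Algebra k Λ] [Ring Γ] [Algebra k Γ]
  [AddCommGroup M] [Module k M] [Module Λ M] [IsScalarTower k Λ M] [SMulCommClass Λ k M]
  [AddCommGroup N] [Module k N] [Module Γ N] [IsScalarTower k Γ N] [SMulCommClass Γ k N]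

noncomputable def WW : ((Module.End Λ M) ⊗[k] (Module.End Γ N)) →ₗ[k] Module.End k (M ⊗[k] N) :=
  TensorProduct.lift (LinearMap.mk₂ k
    (fun φ ψ => TensorProduct.map (φ.restrictScalars k) (ψ.restrictScalars k))
    (by intros; ext; simp [add_tmul]) (by intros; ext; simp [smul_tmul'])
    (by intros; ext; simp [tmul_add]) (by intros; ext; simp))

lemma WW_tmul (φ : Module.End Λ M) (ψ : Module.End Γ N) (m : M) (n : N) :
    WW (k := k) (φ ⊗ₜ ψ) (m ⊗ₜ n) = φ m ⊗ₜ ψ n := by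
  simp [WW]

lemma WW_eq (z : (Module.End Λ M) ⊗[k] (Module.End Γ N)) (m : M) (n : N) :
    WW z (m ⊗ₜ n) = TensorProduct.comm k N M
      (kap (TensorProduct.comm k M (Module.End Γ N) (kap (k := k) z m)) n) := by
  induction z with
  | zero => simp
  | add x y hx hy => simp [hx, hy]
  | tmul φ ψ => 
    rw [WW_tmul, kap_tmul, TensorProduct.comm_tmul, kap_tmul, TensorProduct.comm_tmul]

lemma WW_inj : Function.Injective (WW (k := k) (Λ := Λ) (Γ := Γ) (M := M) (N := N)) := by
  rw [injective_iff_map_eq_zero]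
  intro z hz
  apply kap_inj
  ext m
  apply (TensorProduct.comm k M (Module.End Γ N)).injective
  apply kap_inj
  ext n
  apply (TensorProduct.comm k N M).injective
  rw [← WW_eq, hz]; simp

lemma WW_comm (z : (Module.End Λ M) ⊗[k] (Module.End Γ N)) (l : Λ) (g : Γ) (x : M ⊗[k] N) :
    WW z (TensorProduct.map (Algebra.lsmul k k M l) (Algebra.lsmul k k N g) x) =
    TensorProduct.map (Algebra.lsmul k k M l) (Algebra.lsmul k k N g) (WW z x) := by
  induction z with
  | zero => simp
  | add x y hx hy => simp [hx, hy]
  | tmul φ ψ => 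
    induction x with
    | zero => simp
    | add x y hx hy => simp only [map_add, hx, hy]
    | tmul m n => simp [WW_tmul]

lemma WW_surj [Module.Finite Λ M] [Module.Finite Γ N] (F : Module.End k (M ⊗[k] N))
    (hl : ∀ (l : Λ) x, F (TensorProduct.map (Algebra.lsmul k k M l) LinearMap.id x) =
      TensorProduct.map (Algebra.lsmul k k M l) LinearMap.id (F x))
    (hg : ∀ (g : Γ) x, F (TensorProduct.map LinearMap.id (Algebra.lsmul k k N g) x) =
      TensorProduct.map LinearMap.id (Algebra.lsmul k k N g) (F x)) :
    ∃ z : (Module.End Λ M) ⊗[k] (Module.End Γ N), WW z = F := by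
  have c1 : ∀ (g : Γ) (x : M ⊗[k] N), TensorProduct.comm k M N
      (TensorProduct.map LinearMap.id (Algebra.lsmul k k N g) x) =
      g • TensorProduct.comm k M N x := by
    intro g x
    induction x with
    | zero => simp
    | add x y hx hy => simp only [map_add, hx, hy, smul_add]
    | tmul m n => simp [smul_tmul']
  have c2 : ∀ (l : Λ) (x : M ⊗[k] N), 
      (TensorProduct.map (Algebra.lsmul k k M l) LinearMap.id x) = l • x := by
    intro g x
    induction x with
    | zero => simp
    | add x y hx hy => simp only [map_add, hx, hy, smul_add]
    | tmul m n => simp [smul_tmul']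
  let G : M → (N →ₗ[Γ] (N ⊗[k] M)) := fun m =>
    { toFun := fun n => TensorProduct.comm k M N (F (m ⊗ₜ n))
      map_add' := by intros; simp [tmul_add]
      map_smul' := by
        intro g n
        have := hg g (m ⊗ₜ n)
        simp only [TensorProduct.map_tmul, LinearMap.id_apply, Algebra.lsmul_coe] at this
        rw [this, c1]; rfl }
  have hG : ∀ m n, G m n = TensorProduct.comm k M N (F (m ⊗ₜ n)) := fun _ _ => rfl
  choose H hH using fun m => kap_surj (k := k) (G m)
  let K : M → M ⊗[k] Module.End Γ N := fun m => TensorProduct.comm k _ _ (H m)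
  have hK : ∀ m n, TensorProduct.comm k N M (kap (TensorProduct.comm k M (Module.End Γ N) (K m)) n)
      = F (m ⊗ₜ n) := by
    intro m n
    have : TensorProduct.comm k M (Module.End Γ N) (K m) = H m := by
      simp [K]
    rw [this, hH, hG]
    simp
  have uniq : ∀ x y : M ⊗[k] Module.End Γ N, 
      (∀ n, TensorProduct.comm k N M (kap (TensorProduct.comm k M (Module.End Γ N) x) n) =
        TensorProduct.comm k N M (kap (TensorProduct.comm k M (Module.End Γ N) y) n)) → x = y := by
    intro x y h
    apply (TensorProduct.comm k M (Module.End Γ N)).injective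
    apply kap_inj
    ext n
    exact (TensorProduct.comm k N M).injective (h n)
  have c3 : ∀ (l : Λ) (x : M ⊗[k] Module.End Γ N) n,
      TensorProduct.comm k N M (kap (TensorProduct.comm k M (Module.End Γ N) (l • x)) n) =
      l • TensorProduct.comm k N M (kap (TensorProduct.comm k M (Module.End Γ N) x) n) := by
    intro l x n
    induction x with
    | zero => simp
    | add x y hx hy => simp only [map_add, hx, hy, smul_add, LinearMap.add_apply]
    | tmul m ψ => 
      rw [smul_tmul', TensorProduct.comm_tmul, kap_tmul, TensorProduct.comm_tmul,
        TensorProduct.comm_tmul, kap_tmul, TensorProduct.comm_tmul, smul_tmul']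
  let KL : M →ₗ[Λ] (M ⊗[k] Module.End Γ N) :=
    { toFun := K
      map_add' := by
        intro x y
        apply uniq
        intro n
        simp only [map_add, LinearMap.add_apply, hK, add_tmul]
      map_smul' := by
        intro l x
        apply uniq
        intro n
        rw [RingHom.id_apply, c3, hK, hK, ← c2, ← hl]
        simp }
  obtain ⟨z, hz⟩ := kap_surj (k := k) KL
  refine ⟨z, ?_⟩
  ext m n
  simp only [TensorProduct.AlgebraTensorModule.curry_apply, LinearMap.restrictScalars_self, TensorProduct.curry_apply]
  rw [WW_eq, hz]
  exact hK m n
end untw2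

section tw
lemma mapmap {k M N : Type} [Field k] [AddCommGroup M] [Module k M] [AddCommGroup N] [Module k N]
    (f f' : Module.End k M) (g g' : Module.End k N) (x : M ⊗[k] N) :
    TensorProduct.map f g (TensorProduct.map f' g' x) =
      TensorProduct.map (f * f') (g * g') x := by
  rw [← LinearMap.comp_apply, ← TensorProduct.map_comp]
  rfl

variable {k A B Λ Γ M N : Type} [Field k] [AddCommGroup A] [AddCommGroup B]
  [DecidableEq A] [DecidableEq B]
  [Ring Λ] [Algebra k Λ] [Ring Γ] [Algebra k Γ]
  [AddCommGroup M] [Module k M] [Module Λ M] [IsScalarTower k Λ M] [SMulCommClass Λ k M]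
  [AddCommGroup N] [Module k N] [Module Γ N] [IsScalarTower k Γ N] [SMulCommClass Γ k N]

noncomputable def tau (ℳ : A → Submodule k M) [DirectSum.Decomposition ℳ] (t : A → B → kˣ) (b : B) :
    Module.End k M :=
  (DirectSum.toModule k A M (fun a => (t a b : k) • (ℳ a).subtype)) ∘ₗ
    (DirectSum.decomposeLinearEquiv ℳ).toLinearMap

lemma tau_apply (ℳ : A → Submodule k M) [DirectSum.Decomposition ℳ] (t : A → B → kˣ) (b : B)
    (a : A) (m : M) (hm : m ∈ ℳ a) : tau ℳ t b m = (t a b : k) • m := by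
  simp only [tau, LinearMap.comp_apply, LinearEquiv.coe_coe, DirectSum.decomposeLinearEquiv_apply]
  rw [DirectSum.decompose_of_mem ℳ hm]
  erw [DirectSum.toModule_lof]
  simp

lemma hom_ext {X : Type} [AddCommGroup X] [Module k X]
    (ℳ : A → Submodule k M) [DirectSum.Decomposition ℳ] (f g : M →ₗ[k] X)
    (h : ∀ a, ∀ m ∈ ℳ a, f m = g m) : f = g := by
  ext m
  induction m using DirectSum.Decomposition.inductionOn ℳ with
  | zero => simp
  | homogeneous m => exact h _ _ m.2
  | add x y hx hy => simp [hx, hy]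

lemma tens_ext {X : Type} [AddCommGroup X] [Module k X]
    (𝒩 : B → Submodule k N) [DirectSum.Decomposition 𝒩] (f g : M ⊗[k] N →ₗ[k] X)
    (h : ∀ b, ∀ m, ∀ n ∈ 𝒩 b, f (m ⊗ₜ n) = g (m ⊗ₜ n)) : f = g := by
  apply TensorProduct.ext'
  intro m n
  have := hom_ext 𝒩 (f ∘ₗ TensorProduct.mk k M N m) (g ∘ₗ TensorProduct.mk k M N m)
    (fun b n hn => h b m n hn)
  exact congrArg (fun f => f n) this

lemma tau_add (ℳ : A → Submodule k M) [DirectSum.Decomposition ℳ] (t : A → B → kˣ)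
    (ht₂ : ∀ a b b', t a (b + b') = t a b * t a b') (b b' : B) :
    tau ℳ t (b + b') = tau ℳ t b * tau ℳ t b' := by
  apply hom_ext ℳ
  intro a m hm
  simp [tau_apply ℳ t _ a m hm, ht₂, mul_smul, smul_comm (t a b : k)]

lemma tau_zero (ℳ : A → Submodule k M) [DirectSum.Decomposition ℳ] (t : A → B → kˣ)
    (ht₂ : ∀ a b b', t a (b + b') = t a b * t a b') : tau ℳ t 0 = 1 := by
  apply hom_ext ℳ
  intro a m hm
  have : t a 0 = 1 := by simpa using ht₂ a 0 0
  simp [tau_apply ℳ t _ a m hm, this]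

lemma tau_smul (𝒜 : A → Submodule k Λ) (ℳ : A → Submodule k M) [DirectSum.Decomposition ℳ]
    (t : A → B → kˣ)
    (ht₁ : ∀ a a' b, t (a + a') b = t a b * t a' b)
    (hℳ : ∀ {a a'} (l : Λ) (m : M), l ∈ 𝒜 a → m ∈ ℳ a' → l • m ∈ ℳ (a + a'))
    (c : A) (b : B) (l : Λ) (hl : l ∈ 𝒜 c) (m : M) :
    tau ℳ t b (l • m) = (t c b : k) • l • tau ℳ t b m := by
  have := hom_ext ℳ (tau ℳ t b ∘ₗ Algebra.lsmul k k M l)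
    ((t c b : k) • (Algebra.lsmul k k M l ∘ₗ tau ℳ t b)) (by
      intro a m hm
      simp [tau_apply ℳ t b _ _ hm, tau_apply ℳ t b _ _ (hℳ l m hl hm), ht₁, mul_smul,
        smul_comm l])
  exact congrArg (fun f => f m) this

lemma tau_hom (ℳ : A → Submodule k M) [DirectSum.Decomposition ℳ]
    (t : A → B → kˣ)
    (ht₁ : ∀ a a' b, t (a + a') b = t a b * t a' b)
    (c : A) (b : B) (φ : Module.End Λ M) (hφ : ∀ p : A, ∀ x ∈ ℳ p, φ x ∈ ℳ (p + c)) (m : M) :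
    tau ℳ t b (φ m) = (t c b : k) • φ (tau ℳ t b m) := by
  have := hom_ext ℳ (tau ℳ t b ∘ₗ φ.restrictScalars k)
    ((t c b : k) • (φ.restrictScalars k ∘ₗ tau ℳ t b)) (by
      intro a m hm
      have := LinearMap.map_smul (φ.restrictScalars k) (t a b : k) m
      simp only [LinearMap.coe_restrictScalars] at this
      simp [tau_apply ℳ t b _ _ hm, tau_apply ℳ t b _ _ (hφ _ m hm), ht₁, mul_smul,
        this, smul_comm (t a b : k)])
  exact congrArg (fun f => f m) this

noncomputable def SS (𝒩 : B → Submodule k N) [DirectSum.Decomposition 𝒩]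
    (τ : B → Module.End k M) (s : B →+ B) (F : Module.End k (M ⊗[k] N)) :
    Module.End k (M ⊗[k] N) :=
  TensorProduct.lift (LinearMap.flip
    ((DirectSum.toModule k B (M →ₗ[k] M ⊗[k] N) (fun b =>
      (TensorProduct.curry (TensorProduct.map (τ (s b)) LinearMap.id ∘ₗ F ∘ₗ
        TensorProduct.map (τ (-s b)) LinearMap.id)).flip ∘ₗ (𝒩 b).subtype)) ∘ₗ
    (DirectSum.decomposeLinearEquiv 𝒩).toLinearMap))

lemma SS_apply (𝒩 : B → Submodule k N) [DirectSum.Decomposition 𝒩]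
    (τ : B → Module.End k M) (s : B →+ B) (F : Module.End k (M ⊗[k] N)) (b : B) (m : M) (n : N)
    (hn : n ∈ 𝒩 b) : SS 𝒩 τ s F (m ⊗ₜ n) =
      TensorProduct.map (τ (s b)) LinearMap.id (F (τ (-s b) m ⊗ₜ n)) := by
  simp only [SS, TensorProduct.lift.tmul, LinearMap.flip_apply, LinearMap.comp_apply,
    LinearEquiv.coe_coe, DirectSum.decomposeLinearEquiv_apply]
  rw [DirectSum.decompose_of_mem 𝒩 hn]
  erw [DirectSum.toModule_lof]
  simp

lemma SS_gen (𝒩 : B → Submodule k N) [DirectSum.Decomposition 𝒩]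
    (τ : B → Module.End k M) (s : B →+ B) (F : Module.End k (M ⊗[k] N)) (b : B) (x : M ⊗[k] N)
    (hx : ∃ y : M ⊗[k] 𝒩 b, x = TensorProduct.map LinearMap.id (𝒩 b).subtype y) : SS 𝒩 τ s F x =
      TensorProduct.map (τ (s b)) LinearMap.id
        (F (TensorProduct.map (τ (-s b)) LinearMap.id x)) := by
  obtain ⟨y, rfl⟩ := hx
  induction y with
  | zero => simp
  | add x y hx hy => simp only [map_add, hx, hy]
  | tmul m n => simp [SS_apply 𝒩 τ s F b m n n.2]

variable {τ : B → Module.End k M}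

lemma SS_inv (hτ : ∀ b b', τ (b + b') = τ b * τ b') (hτ0 : τ 0 = 1)
    (𝒩 : B → Submodule k N) [DirectSum.Decomposition 𝒩]
    (s s' : B →+ B) (hs : ∀ b, s b + s' b = 0) (F : Module.End k (M ⊗[k] N)) :
    SS 𝒩 τ s (SS 𝒩 τ s' F) = F := by
  apply tens_ext 𝒩
  intro b m n hn
  have hs' : s' b = - s b := by rw [eq_neg_iff_add_eq_zero, add_comm, hs]
  rw [SS_apply 𝒩 _ _ _ b _ _ hn, SS_apply 𝒩 _ _ _ b _ _ hn, hs']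
  simp only [neg_neg]
  rw [mapmap, ← hτ, ← Module.End.mul_apply (τ (s b)), ← hτ, add_neg_cancel, hτ0]
  erw [TensorProduct.map_id]
  rfl

lemma SS_tw (hτ : ∀ b b', τ (b + b') = τ b * τ b')
    (ℬ : B → Submodule k Γ) (𝒩 : B → Submodule k N) [DirectSum.Decomposition 𝒩]
    (h𝒩 : ∀ {b b'} (g : Γ) (n : N), g ∈ ℬ b → n ∈ 𝒩 b' → g • n ∈ 𝒩 (b + b'))
    (s u v : B →+ B) (huv : v = u + s) (F : Module.End k (M ⊗[k] N)) (c : B) (g : Γ) (hg : g ∈ ℬ c)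
    (hF : ∀ x, F (TensorProduct.map (τ (u c)) (Algebra.lsmul k k N g) x) =
      TensorProduct.map (τ (u c)) (Algebra.lsmul k k N g) (F x)) (x : M ⊗[k] N) :
    SS 𝒩 τ s F (TensorProduct.map (τ (v c)) (Algebra.lsmul k k N g) x) =
      TensorProduct.map (τ (v c)) (Algebra.lsmul k k N g) (SS 𝒩 τ s F x) := by
  subst huv
  have := tens_ext 𝒩 (SS 𝒩 τ s F ∘ₗ (TensorProduct.map (τ ((u + s) c)) (Algebra.lsmul k k N g)))
    ((TensorProduct.map (τ ((u + s) c)) (Algebra.lsmul k k N g)) ∘ₗ SS 𝒩 τ s F) (by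
    intro b m n hn
    simp only [LinearMap.comp_apply, TensorProduct.map_tmul, Algebra.lsmul_coe]
    rw [SS_apply 𝒩 _ _ _ b _ _ hn, SS_apply 𝒩 _ _ _ (c + b) _ _ (h𝒩 g n hg hn)]
    have h1 : τ (-s (c + b)) (τ ((u + s) c) m) = τ (u c) (τ (- s b) m) := by
      rw [← Module.End.mul_apply, ← hτ, ← Module.End.mul_apply, ← hτ]
      congr 2
      simp only [map_add, AddMonoidHom.add_apply]
      abel
    have h2 := hF (τ (-s b) m ⊗ₜ n)
    simp only [TensorProduct.map_tmul, Algebra.lsmul_coe] at h2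
    rw [h1, h2]
    rw [mapmap, mapmap, ← hτ, ← hτ]
    have h5 : s (c + b) + u c = (u + s) c + s b := by
      simp only [map_add, AddMonoidHom.add_apply]
      abel
    rw [h5]
    rfl)
  exact congrArg (fun f => f x) this

lemma SS_lin (𝒜 : A → Submodule k Λ) [GradedAlgebra 𝒜]
    (𝒩 : B → Submodule k N) [DirectSum.Decomposition 𝒩]
    (t : A → B → kˣ) (ht₂ : ∀ a b b', t a (b + b') = t a b * t a b')
    (hτl : ∀ c b (l : Λ), l ∈ 𝒜 c → ∀ m, τ b (l • m) = (t c b : k) • l • τ b m)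
    (s : B →+ B) (F : Module.End k (M ⊗[k] N))
    (hF : ∀ (l : Λ) x, F (TensorProduct.map (Algebra.lsmul k k M l) LinearMap.id x) =
      TensorProduct.map (Algebra.lsmul k k M l) LinearMap.id (F x)) (l : Λ) (x : M ⊗[k] N) :
    SS 𝒩 τ s F (TensorProduct.map (Algebra.lsmul k k M l) LinearMap.id x) =
      TensorProduct.map (Algebra.lsmul k k M l) LinearMap.id (SS 𝒩 τ s F x) := by
  induction l using DirectSum.Decomposition.inductionOn 𝒜 with
  | zero => simp
  | add l l' h h' =>
    simp only [map_add, TensorProduct.map_add_left, LinearMap.add_apply, h, h']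
  | @homogeneous c l =>
    obtain ⟨l, hl⟩ := l
    have := tens_ext 𝒩 (SS 𝒩 τ s F ∘ₗ (TensorProduct.map (Algebra.lsmul k k M l) LinearMap.id))
      ((TensorProduct.map (Algebra.lsmul k k M l) LinearMap.id) ∘ₗ SS 𝒩 τ s F) (by
      intro b m n hn
      simp only [LinearMap.comp_apply, TensorProduct.map_tmul, Algebra.lsmul_coe,
        LinearMap.id_apply]
      rw [SS_apply 𝒩 _ _ _ b _ _ hn, SS_apply 𝒩 _ _ _ b _ _ hn, hτl c _ l hl]
      have h2 := hF l (τ (-s b) m ⊗ₜ n)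
      simp only [TensorProduct.map_tmul, Algebra.lsmul_coe, LinearMap.id_apply] at h2
      rw [← smul_tmul', map_smul, h2, map_smul]
      have h3 : τ (s b) * Algebra.lsmul k k M l =
          (t c (s b) : k) • (Algebra.lsmul k k M l * τ (s b)) := by
        ext m; simp [hτl c _ l hl]
      have h4 : t c (-s b) * t c (s b) = 1 := by
        rw [← ht₂]; simpa using ht₂ c 0 0
      rw [mapmap, h3, TensorProduct.map_smul_left,
        LinearMap.smul_apply, smul_smul, ← Units.val_mul, h4, mapmap, Units.val_one, one_smul])
    exact congrArg (fun f => f x) this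

lemma SS_add (𝒩 : B → Submodule k N) [DirectSum.Decomposition 𝒩]
    (s : B →+ B) (F F' : Module.End k (M ⊗[k] N)) :
    SS 𝒩 τ s (F + F') = SS 𝒩 τ s F + SS 𝒩 τ s F' := by
  apply tens_ext 𝒩
  intro b m n hn
  simp [SS_apply 𝒩 _ _ _ b _ _ hn]

lemma SS_smul (𝒩 : B → Submodule k N) [DirectSum.Decomposition 𝒩]
    (s : B →+ B) (r : k) (F : Module.End k (M ⊗[k] N)) :
    SS 𝒩 τ s (r • F) = r • SS 𝒩 τ s F := by
  apply tens_ext 𝒩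
  intro b m n hn
  simp [SS_apply 𝒩 _ _ _ b _ _ hn]
end tw





/-- For a finitely generated graded `Λ`-module `M` and a finitely
generated graded `Γ`-module `N`, there is an isomorphism of `(A ⊕ B)`-graded algebras
`End_{Λ⊗ᵗΓ}(M ⊗ᵗ N) ≅ End_Λ(M) ⊗ᵗ End_Γ(N)`, the endomorphism rings being graded by
degrees of homomorphisms: the isomorphism sends `φ ⊗ ψ` (with `φ` of degree `a`, `ψ` of
degree `b`) to the endomorphism `m ⊗ n ↦ t⟨a,|n|⟩ φ(m) ⊗ ψ(n)`, it is unital, and it is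
multiplicative for the `t`-twisted product on `End_Λ(M) ⊗ End_Γ(N)`. -/
theorem stmt6 {k A B Λ Γ T M N : Type} [Field k]
    [AddCommGroup A] [AddCommGroup B] [DecidableEq A] [DecidableEq B]
    [Ring Λ] [Algebra k Λ] [Ring Γ] [Algebra k Γ]
    (𝒜 : A → Submodule k Λ) (ℬ : B → Submodule k Γ)
    [GradedAlgebra 𝒜] [GradedAlgebra ℬ]
    (t : A → B → kˣ)
    (ht₁ : ∀ a a' b, t (a + a') b = t a b * t a' b)
    (ht₂ : ∀ a b b', t a (b + b') = t a b * t a b')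
    [Ring T] [Algebra k T] (e : (Λ ⊗[k] Γ) ≃ₗ[k] T)
    (he1 : e (1 ⊗ₜ 1) = 1)
    (hemul : ∀ {a b} (x x' : Λ) (y y' : Γ), x' ∈ 𝒜 a → y ∈ ℬ b →
      e (x ⊗ₜ y) * e (x' ⊗ₜ y') = (t a b : k) • e ((x * x') ⊗ₜ (y * y')))
    -- M a finitely generated graded Λ-module
    [AddCommGroup M] [Module k M] [Module Λ M] [IsScalarTower k Λ M] [SMulCommClass Λ k M]
    (ℳ : A → Submodule k M) [DirectSum.Decomposition ℳ]
    (hℳ : ∀ {a a'} (l : Λ) (m : M), l ∈ 𝒜 a → m ∈ ℳ a' → l • m ∈ ℳ (a + a'))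
    [Module.Finite Λ M]
    -- N a finitely generated graded Γ-module
    [AddCommGroup N] [Module k N] [Module Γ N] [IsScalarTower k Γ N] [SMulCommClass Γ k N]
    (𝒩 : B → Submodule k N) [DirectSum.Decomposition 𝒩]
    (h𝒩 : ∀ {b b'} (g : Γ) (n : N), g ∈ ℬ b → n ∈ 𝒩 b' → g • n ∈ 𝒩 (b + b'))
    [Module.Finite Γ N]
    -- the twisted T-module structure on M ⊗[k] N
    [Module T (M ⊗[k] N)] [IsScalarTower k T (M ⊗[k] N)] [SMulCommClass T k (M ⊗[k] N)]
    (hact : ∀ (am : A) (bg : B) (l : Λ) (g : Γ) (m : M) (n : N), g ∈ ℬ bg → m ∈ ℳ am →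
      e (l ⊗ₜ g) • (m ⊗ₜ n : M ⊗[k] N) = (t am bg : k) • ((l • m) ⊗ₜ (g • n))) :
    ∃ Φ : ((Module.End Λ M) ⊗[k] (Module.End Γ N)) ≃ₗ[k] Module.End T (M ⊗[k] N),
      -- unital
      Φ (1 ⊗ₜ 1) = 1 ∧
      -- `Φ (φ ⊗ ψ)` is the twisted tensor product endomorphism (for `φ` homogeneous of
      -- degree `a` and `n` homogeneous of degree `bn`)
      (∀ (a : A) (bn : B) (φ : Module.End Λ M) (ψ : Module.End Γ N) (m : M) (n : N),
        (∀ p : A, ∀ x ∈ ℳ p, φ x ∈ ℳ (p + a)) → n ∈ 𝒩 bn →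
        Φ (φ ⊗ₜ ψ) (m ⊗ₜ n) = (t a bn : k) • ((φ m) ⊗ₜ (ψ n))) ∧
      -- multiplicative for the twisted product of the graded algebras
      -- `End_Λ(M)` and `End_Γ(N)`
      (∀ (a : A) (b : B) (φ φ' : Module.End Λ M) (ψ ψ' : Module.End Γ N),
        (∀ p : A, ∀ x ∈ ℳ p, φ x ∈ ℳ (p + a)) →
        (∀ q : B, ∀ y ∈ 𝒩 q, ψ' y ∈ 𝒩 (q + b)) →
        Φ (φ ⊗ₜ ψ) * Φ (φ' ⊗ₜ ψ') = (t a b : k) • Φ ((φ * φ') ⊗ₜ (ψ * ψ'))) := by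
  have hτ := tau_add ℳ t ht₂
  have hτ0 := tau_zero ℳ t ht₂
  have hτl := fun c b (l : Λ) hl m => tau_smul 𝒜 ℳ t ht₁ hℳ c b l hl m
  set τ : B → Module.End k M := tau ℳ t with hτdef
  have t00 : ∀ a, t a 0 = 1 := fun a => by simpa using ht₂ a 0 0
  -- the action
  have act : ∀ (c : B) (l : Λ) (g : Γ), g ∈ ℬ c → ∀ x : M ⊗[k] N,
      e (l ⊗ₜ g) • x = TensorProduct.map (Algebra.lsmul k k M l) LinearMap.id
        (TensorProduct.map (τ c) (Algebra.lsmul k k N g) x) := by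
    intro c l g hg x
    induction x with
    | zero => simp
    | add x y hx hy => simp only [map_add, smul_add, hx, hy]
    | tmul m n =>
      induction m using DirectSum.Decomposition.inductionOn ℳ with
      | zero => simp
      | add m m' h h' => simp only [add_tmul, smul_add, h, h', map_add]
      | @homogeneous a m =>
        rw [hact a c l g m n hg m.2]
        simp [hτdef, tau_apply ℳ t c a m m.2, smul_tmul', smul_comm l]
  have actl : ∀ (l : Λ) (x : M ⊗[k] N),
      e (l ⊗ₜ 1) • x = TensorProduct.map (Algebra.lsmul k k M l) LinearMap.id x := by
    intro l x
    rw [act 0 l 1 (SetLike.GradedOne.one_mem) x, hτ0, map_one]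
    erw [TensorProduct.map_id]
    rfl
  have actr : ∀ (c : B) (g : Γ), g ∈ ℬ c → ∀ x : M ⊗[k] N,
      e (1 ⊗ₜ g) • x = TensorProduct.map (τ c) (Algebra.lsmul k k N g) x := by
    intro c g hg x
    rw [act c 1 g hg x, map_one]
    erw [TensorProduct.map_id]
    rfl
  let s1 : B →+ B := AddMonoidHom.id B
  -- T-linearity
  have lin : ∀ (z : (Module.End Λ M) ⊗[k] (Module.End Γ N)) (r : T) (x : M ⊗[k] N),
      SS 𝒩 τ s1 (WW z) (r • x) = r • SS 𝒩 τ s1 (WW z) x := by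
    intro z r x
    obtain ⟨r, rfl⟩ := e.surjective r
    induction r with
    | zero => simp
    | add r r' h h' => simp only [map_add, add_smul, h, h']
    | tmul l g =>
      induction g using DirectSum.Decomposition.inductionOn ℬ with
      | zero => simp
      | add g g' h h' => simp only [tmul_add, map_add, add_smul, h, h']
      | @homogeneous c g =>
        rw [act c l g g.2, act c l g g.2]
        rw [SS_lin 𝒜 𝒩 t ht₂ hτl]
        · congr 1
          refine SS_tw hτ ℬ 𝒩 h𝒩 s1 0 s1 (by simp) (WW z) c g g.2 ?_ x
          intro x
          have := WW_comm z 1 (g : Γ) x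
          rw [map_one] at this
          simpa [hτ0] using this
        · intro l x
          have := WW_comm z l 1 x
          rw [map_one] at this
          exact this
  let Φ0 : ((Module.End Λ M) ⊗[k] (Module.End Γ N)) →ₗ[k] Module.End T (M ⊗[k] N) :=
    { toFun := fun z =>
        { toFun := SS 𝒩 τ s1 (WW z)
          map_add' := map_add _
          map_smul' := lin z }
      map_add' := by
        intro x y
        apply LinearMap.ext
        intro w
        exact congrArg (fun f => f w) (by rw [map_add, SS_add] :
          SS 𝒩 τ s1 (WW (x + y)) = SS 𝒩 τ s1 (WW x) + SS 𝒩 τ s1 (WW y))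
      map_smul' := by
        intro r x
        apply LinearMap.ext
        intro w
        exact congrArg (fun f => f w) (by rw [map_smul, SS_smul] :
          SS 𝒩 τ s1 (WW (r • x)) = r • SS 𝒩 τ s1 (WW x)) }
  have hΦ0 : ∀ z x, Φ0 z x = SS 𝒩 τ s1 (WW z) x := fun _ _ => rfl
  have inv1 := SS_inv (N := N) hτ hτ0 𝒩 s1 (-s1) (by intro b; simp)
  have inv2 := SS_inv (N := N) hτ hτ0 𝒩 (-s1) s1 (by intro b; simp)
  have inj : Function.Injective Φ0 := by
    intro z z' h
    apply WW_inj
    rw [← inv2 (WW z), ← inv2 (WW z')]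
    congr 1
    apply LinearMap.ext
    intro x
    rw [← hΦ0, ← hΦ0, h]
  have surj : Function.Surjective Φ0 := by
    intro G
    let G' : Module.End k (M ⊗[k] N) := G.restrictScalars k
    have hG' : ∀ (r : T) x, G' (r • x) = r • G' x := fun r x => G.map_smul r x
    obtain ⟨z, hz⟩ := WW_surj (Λ := Λ) (Γ := Γ) (SS 𝒩 τ (-s1) G') (by
      apply SS_lin 𝒜 𝒩 t ht₂ hτl
      intro l x
      rw [← actl, hG', actl]) (by
      intro g x
      induction g using DirectSum.Decomposition.inductionOn ℬ with
      | zero => simp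
      | add g g' h h' =>
        simp only [map_add, TensorProduct.map_add_right, LinearMap.add_apply, h, h']
      | @homogeneous c g =>
        have := SS_tw hτ ℬ 𝒩 h𝒩 (-s1) s1 0 (by simp) G' c g g.2 (by
          intro x
          have h := hG' (e (1 ⊗ₜ (g : Γ))) x
          rw [actr c g g.2, actr c g g.2] at h
          exact h) x
        simp only [AddMonoidHom.zero_apply, hτ0] at this
        exact this)
    refine ⟨z, ?_⟩
    apply LinearMap.ext
    intro x
    rw [hΦ0, hz, inv1]
    rfl
  have Φt : ∀ (b : B) (φ : Module.End Λ M) (ψ : Module.End Γ N) (m : M) (n : N), n ∈ 𝒩 b →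
      Φ0 (φ ⊗ₜ ψ) (m ⊗ₜ n) = τ b (φ (τ (-b) m)) ⊗ₜ ψ n := by
    intro b φ ψ m n hn
    rw [hΦ0, SS_apply 𝒩 _ _ _ b _ _ hn, WW_tmul]
    rfl
  have τi : ∀ b m, τ b (τ (-b) m) = m := by
    intro b m
    rw [← Module.End.mul_apply, ← hτ]
    simp [hτ0]
  have Φh : ∀ (a : A) (bn : B) (φ : Module.End Λ M) (ψ : Module.End Γ N) (m : M) (n : N),
        (∀ p : A, ∀ x ∈ ℳ p, φ x ∈ ℳ (p + a)) → n ∈ 𝒩 bn →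
        Φ0 (φ ⊗ₜ ψ) (m ⊗ₜ n) = (t a bn : k) • ((φ m) ⊗ₜ (ψ n)) := by
    intro a b φ ψ m n hφ hn
    rw [Φt b _ _ _ _ hn, tau_hom ℳ t ht₁ a b φ hφ, τi, smul_tmul']
  have Text : ∀ f g : Module.End T (M ⊗[k] N),
      (∀ b, ∀ m, ∀ n ∈ 𝒩 b, f (m ⊗ₜ n) = g (m ⊗ₜ n)) → f = g := by
    intro f g h
    have := tens_ext 𝒩 (f.restrictScalars k) (g.restrictScalars k) h
    apply LinearMap.ext
    intro x
    exact congrArg (fun f => f x) this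
  have bij : Function.Bijective Φ0 := ⟨inj, surj⟩
  refine ⟨LinearEquiv.ofBijective Φ0 bij, ?_, ?_, ?_⟩
  · rw [LinearEquiv.ofBijective_apply]
    apply Text
    intro b m n hn
    rw [Φt b _ _ _ _ hn]
    simp [τi]
  · intro a b φ ψ m n hφ hn
    rw [LinearEquiv.ofBijective_apply]
    exact Φh a b φ ψ m n hφ hn
  · intro a b φ φ' ψ ψ' hφ hψ
    simp only [LinearEquiv.ofBijective_apply]
    apply Text
    intro q m n hn
    rw [Module.End.mul_apply, LinearMap.smul_apply, Φt q _ _ _ _ hn, Φt q _ _ _ _ hn,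
      Φh a (q + b) φ ψ _ _ hφ (hψ q n hn), Module.End.mul_apply, tau_hom ℳ t ht₁ a q φ hφ,
      ← smul_tmul', smul_smul, ht₂, Units.val_mul, mul_comm]
    rfl
end

section
/- If P_• → M → 0 is a graded projective resolution of the graded Λ-module M and Q_• → N → 0 is a graded projective resolution of the graded Γ-module N, then the total complex of the double complex P_• ⊗_k^t Q_• is a graded projective resolution of M ⊗_k^t N over Λ ⊗_k^t Γ. -/
open TensorProduct DirectSum

/-- The `(i,j)`-component `P i ⊗[k] Q j` of the total complex. -/
abbrev TotTerm (k : Type) [Field k] (P Q : ℕ → Type)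
    [∀ i, AddCommGroup (P i)] [∀ i, Module k (P i)]
    [∀ j, AddCommGroup (Q j)] [∀ j, Module k (Q j)]
    {n : ℕ} (p : {p : ℕ × ℕ // p.1 + p.2 = n}) : Type :=
  P p.1.1 ⊗[k] Q p.1.2

theorem aux_tlin {k A B Λ Γ T P Q Y : Type} [Field k]
    [AddCommGroup A] [AddCommGroup B] [DecidableEq A] [DecidableEq B]
    [Ring Λ] [Algebra k Λ] [Ring Γ] [Algebra k Γ]
    (ℬ : B → Submodule k Γ) [GradedAlgebra ℬ]
    [Ring T] [Algebra k T] (e : (Λ ⊗[k] Γ) ≃ₗ[k] T)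
    [AddCommGroup P] [Module k P]
    (𝓟 : A → Submodule k P) [DirectSum.Decomposition 𝓟]
    [AddCommGroup Q] [Module k Q]
    [Module T (P ⊗[k] Q)]
    [AddCommGroup Y] [Module k Y] [Module T Y]
    (φ : P ⊗[k] Q →ₗ[k] Y)
    (hφ : ∀ (a : A) (b : B) (l : Λ) (g : Γ) (p : P) (q : Q), g ∈ ℬ b → p ∈ 𝓟 a →
      φ (e (l ⊗ₜ g) • (p ⊗ₜ q)) = e (l ⊗ₜ g) • φ (p ⊗ₜ q)) (s : T) (x : P ⊗[k] Q) :
    φ (s • x) = s • φ x := by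
  obtain ⟨z, rfl⟩ := e.surjective s
  induction z with
  | zero => simp
  | add z w hz hw => simp only [map_add, add_smul, hz, hw]
  | tmul l g =>
    induction g using DirectSum.Decomposition.inductionOn ℬ with
    | zero => simp
    | add g g' h h' => simp only [tmul_add, map_add, add_smul, h, h']
    | @homogeneous b g =>
      induction x with
      | zero => simp
      | add z w hz hw => simp only [map_add, smul_add, hz, hw]
      | tmul p q =>
        induction p using DirectSum.Decomposition.inductionOn 𝓟 with
        | zero => simp
        | add g g' h h' => simp only [add_tmul, map_add, smul_add, h, h']
        | @homogeneous a p => exact hφ a b l g p q g.2 p.2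

theorem aux_graded_basis {k A Λ P : Type} [Field k]
    [AddCommGroup A] [DecidableEq A]
    [Ring Λ] [Algebra k Λ]
    (𝒜 : A → Submodule k Λ) [GradedAlgebra 𝒜]
    [AddCommGroup P] [Module k P] [Module Λ P] [IsScalarTower k Λ P] [Module.Projective Λ P]
    (𝓟 : A → Submodule k P) [DirectSum.Decomposition 𝓟]
    (h𝓟 : ∀ {a a'} (l : Λ) (p : P), l ∈ 𝒜 a → p ∈ 𝓟 a' → l • p ∈ 𝓟 (a + a')) :
    ∃ (ι : Type) (deg : ι → A) (x : ι → P) (f : P →ₗ[Λ] (ι →₀ Λ)),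
      (∀ i, x i ∈ 𝓟 (deg i)) ∧
      (∀ a, ∀ p ∈ 𝓟 a, ∀ i, f p i ∈ 𝒜 (a - deg i)) ∧
      ∀ p, Finsupp.linearCombination Λ x (f p) = p := by
  let ι := Σ a, 𝓟 a
  let deg : ι → A := fun i => i.1
  let x : ι → P := fun i => i.2.1
  have hx : ∀ i, x i ∈ 𝓟 (deg i) := fun i => i.2.2
  have hsurj : Function.Surjective (Finsupp.linearCombination Λ x) := by
    intro p
    induction p using DirectSum.Decomposition.inductionOn 𝓟 with
    | zero => exact ⟨0, by simp⟩
    | add g g' h h' =>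
      obtain ⟨u, rfl⟩ := h
      obtain ⟨v, rfl⟩ := h'
      exact ⟨u + v, by simp⟩
    | @homogeneous a p => exact ⟨Finsupp.single ⟨a, p⟩ 1, by simp [x]⟩
  obtain ⟨s, hs⟩ := Module.projective_lifting_property _ LinearMap.id hsurj
  have hs' : ∀ p, Finsupp.linearCombination Λ x (s p) = p := fun p => LinearMap.congr_fun hs p
  let C : A → (ι →₀ Λ) →ₗ[k] (ι →₀ Λ) := fun a =>
    Finsupp.lsum k (fun i => Finsupp.lsingle i ∘ₗ GradedAlgebra.proj 𝒜 (a - deg i))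
  have hCs : ∀ a i l, C a (Finsupp.single i l) =
      Finsupp.single i (DirectSum.decompose 𝒜 l (a - deg i) : Λ) := by
    intro a i l
    simp [C, GradedAlgebra.proj_apply]
  have hC : ∀ a v i, C a v i = (DirectSum.decompose 𝒜 (v i) (a - deg i) : Λ) := by
    intro a v i
    induction v using Finsupp.induction_linear with
    | zero => simp
    | add u v hu hv => simp [hu, hv]
    | single j l =>
      rw [hCs]
      by_cases h : j = i
      · subst h; simp
      · simp [Finsupp.single_apply, h]
  have hCmul : ∀ a b l v, l ∈ 𝒜 b → C (b + a) (l • v) = l • C a v := by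
    intro a b l v hl
    ext i
    rw [Finsupp.smul_apply, hC, hC, Finsupp.smul_apply, smul_eq_mul, smul_eq_mul, add_sub_assoc,
      DirectSum.coe_decompose_mul_add_of_left_mem 𝒜 hl]
  have hπC : ∀ a v, Finsupp.linearCombination Λ x (C a v) =
      (DirectSum.decompose 𝓟 (Finsupp.linearCombination Λ x v) a : P) := by
    intro a v
    induction v using Finsupp.induction_linear with
    | zero => simp
    | add u v hu hv => simp [hu, hv]
    | single j l =>
      rw [hCs]
      simp only [Finsupp.linearCombination_single]
      induction l using DirectSum.Decomposition.inductionOn 𝒜 with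
      | zero => simp
      | add u v hu hv => simp [hu, hv, add_smul]
      | @homogeneous c l =>
        have h1 := h𝓟 l.1 (x j) l.2 (hx j)
        by_cases h : c = a - deg j
        · subst h
          rw [DirectSum.decompose_of_mem_same 𝒜 l.2]
          rw [sub_add_cancel] at h1
          rw [DirectSum.decompose_of_mem_same 𝓟 h1]
        · rw [DirectSum.decompose_of_mem_ne 𝒜 l.2 h,
            DirectSum.decompose_of_mem_ne 𝓟 h1 (fun h' => h (by rw [← h']; simp)), zero_smul]
  let s' : P →ₗ[k] (ι →₀ Λ) :=
    (DirectSum.toModule k A _ (fun a => C a ∘ₗ s.restrictScalars k ∘ₗ (𝓟 a).subtype)) ∘ₗ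
      (DirectSum.decomposeLinearEquiv 𝓟).toLinearMap
  have hs'h : ∀ a, ∀ p ∈ 𝓟 a, s' p = C a (s p) := by
    intro a p hp
    simp only [s', LinearMap.comp_apply, LinearEquiv.coe_coe, DirectSum.decomposeLinearEquiv_apply]
    rw [DirectSum.decompose_of_mem 𝓟 hp, ← DirectSum.lof_eq_of k, DirectSum.toModule_lof]
    simp
  have hlin : ∀ (l : Λ) p, s' (l • p) = l • s' p := by
    intro l p
    induction l using DirectSum.Decomposition.inductionOn 𝒜 with
    | zero => simp
    | add u v hu hv => simp [hu, hv, add_smul]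
    | @homogeneous c l =>
      induction p using DirectSum.Decomposition.inductionOn 𝓟 with
      | zero => simp
      | add u v hu hv => simp only [hu, hv, smul_add, map_add]
      | @homogeneous a p =>
        rw [hs'h _ _ (h𝓟 l.1 p.1 l.2 p.2), hs'h _ _ p.2, map_smul, hCmul _ _ _ _ l.2]
  refine ⟨ι, deg, x, { s' with map_smul' := hlin }, hx, ?_, ?_⟩
  · intro a p hp i
    change s' p i ∈ _
    rw [hs'h a p hp, hC]
    exact SetLike.coe_mem _
  · intro p
    change Finsupp.linearCombination Λ x (s' p) = p
    induction p using DirectSum.Decomposition.inductionOn 𝓟 with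
    | zero => simp
    | add u v hu hv => simp only [hu, hv, map_add]
    | @homogeneous a p =>
      rw [hs'h _ _ p.2, hπC, hs', DirectSum.decompose_of_mem_same 𝓟 p.2]

theorem aux_proj {k A B Λ Γ T P Q : Type} [Field k]
    [AddCommGroup A] [AddCommGroup B] [DecidableEq A] [DecidableEq B]
    [Ring Λ] [Algebra k Λ] [Ring Γ] [Algebra k Γ]
    (𝒜 : A → Submodule k Λ) (ℬ : B → Submodule k Γ)
    [GradedAlgebra 𝒜] [GradedAlgebra ℬ]
    (t : A → B → kˣ)
    (ht₁ : ∀ a a' b, t (a + a') b = t a b * t a' b)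
    (ht₂ : ∀ a b b', t a (b + b') = t a b * t a b')
    [Ring T] [Algebra k T] (e : (Λ ⊗[k] Γ) ≃ₗ[k] T)
    (hemul : ∀ {a b} (x x' : Λ) (y y' : Γ), x' ∈ 𝒜 a → y ∈ ℬ b →
      e (x ⊗ₜ y) * e (x' ⊗ₜ y') = (t a b : k) • e ((x * x') ⊗ₜ (y * y')))
    [AddCommGroup P] [Module k P] [Module Λ P] [IsScalarTower k Λ P] [Module.Projective Λ P]
    (𝓟 : A → Submodule k P) [DirectSum.Decomposition 𝓟]
    (h𝓟 : ∀ {a a'} (l : Λ) (p : P), l ∈ 𝒜 a → p ∈ 𝓟 a' → l • p ∈ 𝓟 (a + a'))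
    [AddCommGroup Q] [Module k Q] [Module Γ Q] [IsScalarTower k Γ Q] [Module.Projective Γ Q]
    [Module T (P ⊗[k] Q)] [IsScalarTower k T (P ⊗[k] Q)]
    (hact : ∀ (am : A) (bg : B) (l : Λ) (g : Γ) (p : P) (q : Q),
      g ∈ ℬ bg → p ∈ 𝓟 am →
      e (l ⊗ₜ g) • (p ⊗ₜ q : P ⊗[k] Q) = (t am bg : k) • ((l • p) ⊗ₜ (g • q))) :
    Module.Projective T (P ⊗[k] Q) := by
  obtain ⟨ι, deg, x, f, hx, hf, hfx⟩ := aux_graded_basis 𝒜 𝓟 h𝓟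
  obtain ⟨u, hu⟩ := Module.projective_def'.1 (inferInstance : Module.Projective Γ Q)
  have hu' : ∀ q, Finsupp.linearCombination Γ id (u q) = q := fun q => LinearMap.congr_fun hu q
  let τ : A → Γ →ₗ[k] Γ := fun a =>
    (DirectSum.toModule k B _ (fun b => (((t a b)⁻¹ : kˣ) : k) • (ℬ b).subtype)) ∘ₗ
      (DirectSum.decomposeLinearEquiv ℬ).toLinearMap
  have hτ : ∀ a b, ∀ g ∈ ℬ b, τ a g = (((t a b)⁻¹ : kˣ) : k) • g := by
    intro a b g hg
    simp only [τ, LinearMap.comp_apply, LinearEquiv.coe_coe, DirectSum.decomposeLinearEquiv_apply]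
    rw [DirectSum.decompose_of_mem ℬ hg, ← DirectSum.lof_eq_of k, DirectSum.toModule_lof]
    simp
  have hτmul : ∀ a b, ∀ g ∈ ℬ b, ∀ h, τ a (g * h) = (((t a b)⁻¹ : kˣ) : k) • (g * τ a h) := by
    intro a b g hg h
    induction h using DirectSum.Decomposition.inductionOn ℬ with
    | zero => simp
    | add u v hu hv => simp only [hu, hv, mul_add, map_add, smul_add]
    | @homogeneous c h =>
      rw [hτ _ _ _ (SetLike.mul_mem_graded hg h.2), hτ _ _ _ h.2, ht₂, mul_inv, mul_smul_comm,
        smul_smul, Units.val_mul]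
  let W : ι × Q → (Λ ⊗[k] Γ) →ₗ[k] T := fun i => e.toLinearMap ∘ₗ (τ (deg i.1)).lTensor Λ
  let V : ((ι →₀ Λ) ⊗[k] (Q →₀ Γ)) →ₗ[k] (ι × Q →₀ T) :=
    (Finsupp.lsum k (fun i => Finsupp.lsingle i ∘ₗ W i)) ∘ₗ
      (finsuppTensorFinsupp k k Λ Γ ι Q).toLinearMap
  have hVs : ∀ i l y g, V (Finsupp.single i l ⊗ₜ Finsupp.single y g) =
      Finsupp.single (i, y) (e (l ⊗ₜ τ (deg i) g)) := by
    intro i l y g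
    simp [V, W]
  have hV : ∀ v w i y, V (v ⊗ₜ w) (i, y) = e (v i ⊗ₜ τ (deg i) (w y)) := by
    intro v w i y
    induction v using Finsupp.induction_linear with
    | zero => simp
    | add u v hu hv => simp [hu, hv, add_tmul]
    | single j l =>
      induction w using Finsupp.induction_linear with
      | zero => simp
      | add u v hu hv => simp [hu, hv, tmul_add]
      | single z g =>
        rw [hVs]
        by_cases h : j = i
        · subst h
          by_cases h2 : z = y
          · subst h2; simp
          · simp [h2, Finsupp.single_apply]
        · simp [h, Finsupp.single_apply]
  let S : P ⊗[k] Q →ₗ[k] (ι × Q →₀ T) :=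
    V ∘ₗ TensorProduct.map (f.restrictScalars k) (u.restrictScalars k)
  have hS : ∀ p q, S (p ⊗ₜ q) = V (f p ⊗ₜ u q) := fun p q => rfl
  have hSlin : ∀ (s : T) z, S (s • z) = s • S z := by
    apply aux_tlin ℬ e 𝓟 S
    intro a b l g p q hg hp
    rw [hact a b l g p q hg hp, map_smul, hS, hS, map_smul, map_smul]
    ext ⟨i, y⟩
    rw [Finsupp.smul_apply, Finsupp.smul_apply, hV, hV, smul_eq_mul,
      hemul _ _ _ _ (hf a p hp i) hg, Finsupp.smul_apply, Finsupp.smul_apply, smul_eq_mul,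
      smul_eq_mul, hτmul _ _ _ hg, tmul_smul, map_smul, smul_smul]
    congr 1
    rw [← Units.val_mul]
    congr 1
    have := ht₁ (a - deg i) (deg i) b
    rw [sub_add_cancel] at this
    rw [this, mul_inv_cancel_right]
  have hact2 : ∀ i l y g, e (l ⊗ₜ τ (deg i) g) • (x i ⊗ₜ y : P ⊗[k] Q) = (l • x i) ⊗ₜ (g • y) := by
    intro i l y g
    induction g using DirectSum.Decomposition.inductionOn ℬ with
    | zero => simp
    | add u v hu hv => simp only [hu, hv, map_add, tmul_add, add_smul]
    | @homogeneous c g =>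
      rw [hτ _ _ _ g.2, tmul_smul, map_smul, smul_assoc, hact _ _ _ _ _ _ g.2 (hx i), smul_smul,
        ← Units.val_mul, inv_mul_cancel, Units.val_one, one_smul]
  let R : (ι × Q →₀ T) →ₗ[T] P ⊗[k] Q :=
    Finsupp.linearCombination T (fun i : ι × Q => (x i.1 ⊗ₜ i.2 : P ⊗[k] Q))
  have hRV : ∀ v w, R (V (v ⊗ₜ w)) =
      Finsupp.linearCombination Λ x v ⊗ₜ Finsupp.linearCombination Γ id w := by
    intro v w
    induction v using Finsupp.induction_linear with
    | zero => simp
    | add u v hu hv => simp only [hu, hv, add_tmul, map_add]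
    | single j l =>
      induction w using Finsupp.induction_linear with
      | zero => simp
      | add u v hu hv => simp only [hu, hv, tmul_add, map_add]
      | single z g =>
        rw [hVs]
        simp only [R, Finsupp.linearCombination_single, hact2, id]
  refine Module.Projective.of_split { S with map_smul' := hSlin } R ?_
  ext z
  change R (S z) = z
  induction z with
  | zero => simp
  | add u v hu hv => simp only [map_add, hu, hv]
  | tmul p q => rw [hS, hRV, hfx, hu']

theorem aux_contract {k M : Type} [Field k] [AddCommGroup M] [Module k M]
    (P : ℕ → Type) [∀ i, AddCommGroup (P i)] [∀ i, Module k (P i)]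
    (d : ∀ i, P (i + 1) →ₗ[k] P i) (ε : P 0 →ₗ[k] M)
    (hε : Function.Surjective ε)
    (h0 : LinearMap.ker ε = LinearMap.range (d 0))
    (hex : ∀ i, LinearMap.ker (d i) = LinearMap.range (d (i + 1))) :
    ∃ (σ : M →ₗ[k] P 0) (s : ∀ i, P i →ₗ[k] P (i + 1)),
      (∀ m, ε (σ m) = m) ∧ (∀ p, d 0 (s 0 p) = p - σ (ε p)) ∧
      (∀ i p, d (i + 1) (s (i + 1) p) = p - s i (d i p)) := by
  obtain ⟨σ, hσ⟩ := ε.exists_rightInverse_of_surjective (LinearMap.range_eq_top.2 hε)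
  have hσ' : ∀ m, ε (σ m) = m := fun m => LinearMap.congr_fun hσ m
  have hr : ∀ i, ∃ r : P i →ₗ[k] P (i + 1), ∀ y, d i (r (d i y)) = d i y := by
    intro i
    obtain ⟨g, hg⟩ := (d i).rangeRestrict.exists_rightInverse_of_surjective
      (LinearMap.range_rangeRestrict _)
    obtain ⟨r, hr⟩ := LinearMap.exists_extend g
    refine ⟨r, fun y => ?_⟩
    have h1 : r (d i y) = g ((d i).rangeRestrict y) :=
      LinearMap.congr_fun hr ((d i).rangeRestrict y)
    rw [h1]
    exact congrArg Subtype.val (LinearMap.congr_fun hg ((d i).rangeRestrict y))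
  choose r hr using hr
  have hdd : ∀ i y, d i (d (i + 1) y) = 0 := by
    intro i y
    have : d (i + 1) y ∈ LinearMap.ker (d i) := by rw [hex]; exact ⟨y, rfl⟩
    exact this
  have hed : ∀ y, ε (d 0 y) = 0 := by
    intro y
    have : d 0 y ∈ LinearMap.ker ε := by rw [h0]; exact ⟨y, rfl⟩
    exact this
  let s : ∀ i, P i →ₗ[k] P (i + 1) := fun i => match i with
    | 0 => r 0 ∘ₗ (LinearMap.id - σ ∘ₗ ε)
    | i + 1 => r (i + 1) ∘ₗ (LinearMap.id - r i ∘ₗ d i)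
  have hs0 : ∀ p, s 0 p = r 0 (p - σ (ε p)) := fun p => rfl
  have hs1 : ∀ i p, s (i + 1) p = r (i + 1) (p - r i (d i p)) := fun i p => rfl
  have hsd : ∀ i y, s i (d i y) = r i (d i y) := by
    intro i y
    cases i with
    | zero => rw [hs0, hed]; simp
    | succ i => rw [hs1, hdd]; simp
  refine ⟨σ, s, hσ', ?_, ?_⟩
  · intro p
    have : p - σ (ε p) ∈ LinearMap.ker ε := by simp [hσ']
    rw [h0] at this
    obtain ⟨y, hy⟩ := this
    rw [hs0, ← hy, hr]
  · intro i p
    have : p - r i (d i p) ∈ LinearMap.ker (d i) := by simp [hr]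
    rw [hex] at this
    obtain ⟨y, hy⟩ := this
    rw [hs1, hsd, ← hy, hr]

abbrev auxTot (k : Type) [Field k] (P Q : ℕ → Type)
    [∀ i, AddCommGroup (P i)] [∀ i, Module k (P i)]
    [∀ j, AddCommGroup (Q j)] [∀ j, Module k (Q j)] (n : ℕ) : Type :=
  ⨁ (p : {p : ℕ × ℕ // p.1 + p.2 = n}), TotTerm k P Q p

def auxInc (k : Type) [Field k] (P Q : ℕ → Type)
    [∀ i, AddCommGroup (P i)] [∀ i, Module k (P i)]
    [∀ j, AddCommGroup (Q j)] [∀ j, Module k (Q j)] (n i j : ℕ) (h : i + j = n) :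
    P i ⊗[k] Q j →ₗ[k] auxTot k P Q n :=
  DirectSum.lof k _ (TotTerm k P Q) ⟨(i, j), h⟩

theorem auxTot_ext {k : Type} [Field k] {P Q : ℕ → Type}
    [∀ i, AddCommGroup (P i)] [∀ i, Module k (P i)]
    [∀ j, AddCommGroup (Q j)] [∀ j, Module k (Q j)] {n : ℕ} {Y : Type} [AddCommGroup Y]
    (f g : auxTot k P Q n →+ Y)
    (H : ∀ i j h p q, f (auxInc k P Q n i j h (p ⊗ₜ q)) = g (auxInc k P Q n i j h (p ⊗ₜ q)))
    (x : auxTot k P Q n) : f x = g x := by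
  induction x using DirectSum.induction_on with
  | zero => simp
  | add x y hx hy => simp only [map_add, hx, hy]
  | of i z =>
    obtain ⟨⟨i, j⟩, h⟩ := i
    change P i ⊗[k] Q j at z
    induction z with
    | zero => simp
    | add x y hx hy => simp only [map_add, hx, hy]
    | tmul p q => exact H i j h p q

def auxH (k : Type) [Field k] (P Q : ℕ → Type)
    [∀ i, AddCommGroup (P i)] [∀ i, Module k (P i)]
    [∀ j, AddCommGroup (Q j)] [∀ j, Module k (Q j)]
    (s : ∀ i, P i →ₗ[k] P (i + 1)) (s' : ∀ i, Q i →ₗ[k] Q (i + 1)) (π : P 0 →ₗ[k] P 0) (n : ℕ) :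
    auxTot k P Q n →ₗ[k] auxTot k P Q (n + 1) :=
  DirectSum.toModule k _ _ (fun p => match p with
    | ⟨(0, j), h⟩ =>
      auxInc k P Q (n + 1) 1 j (by omega) ∘ₗ TensorProduct.map (s 0) LinearMap.id +
      auxInc k P Q (n + 1) 0 (j + 1) (by omega) ∘ₗ TensorProduct.map π (s' j)
    | ⟨(i + 1, j), h⟩ =>
      auxInc k P Q (n + 1) (i + 2) j (by omega) ∘ₗ TensorProduct.map (s (i + 1)) LinearMap.id)

theorem aux_exact {k M N : Type} [Field k] [AddCommGroup M] [Module k M]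
    [AddCommGroup N] [Module k N] (P Q : ℕ → Type)
    [∀ i, AddCommGroup (P i)] [∀ i, Module k (P i)]
    [∀ j, AddCommGroup (Q j)] [∀ j, Module k (Q j)]
    (d : ∀ i, P (i + 1) →ₗ[k] P i) (ε : P 0 →ₗ[k] M)
    (hε : Function.Surjective ε)
    (h0 : LinearMap.ker ε = LinearMap.range (d 0))
    (hex : ∀ i, LinearMap.ker (d i) = LinearMap.range (d (i + 1)))
    (d' : ∀ i, Q (i + 1) →ₗ[k] Q i) (ε' : Q 0 →ₗ[k] N)
    (hε' : Function.Surjective ε')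
    (h0' : LinearMap.ker ε' = LinearMap.range (d' 0))
    (hex' : ∀ i, LinearMap.ker (d' i) = LinearMap.range (d' (i + 1)))
    (D : ∀ n, auxTot k P Q (n + 1) →+ auxTot k P Q n)
    (E : auxTot k P Q 0 →+ M ⊗[k] N)
    (hD1 : ∀ (n i j : ℕ) (h : (i + 1) + (j + 1) = n + 1) (p : P (i + 1)) (q : Q (j + 1)),
      D n (auxInc k P Q (n + 1) (i + 1) (j + 1) h (p ⊗ₜ q)) =
        auxInc k P Q n i (j + 1) (by omega) (d i p ⊗ₜ q) +
        ((-1 : ℤ) ^ (i + 1)) • auxInc k P Q n (i + 1) j (by omega) (p ⊗ₜ d' j q))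
    (hD2 : ∀ (n j : ℕ) (h : 0 + (j + 1) = n + 1) (p : P 0) (q : Q (j + 1)),
      D n (auxInc k P Q (n + 1) 0 (j + 1) h (p ⊗ₜ q)) =
        auxInc k P Q n 0 j (by omega) (p ⊗ₜ d' j q))
    (hD3 : ∀ (n i : ℕ) (h : (i + 1) + 0 = n + 1) (p : P (i + 1)) (q : Q 0),
      D n (auxInc k P Q (n + 1) (i + 1) 0 h (p ⊗ₜ q)) =
        auxInc k P Q n i 0 (by omega) (d i p ⊗ₜ q))
    (hE : ∀ (p : P 0) (q : Q 0), E (auxInc k P Q 0 0 0 rfl (p ⊗ₜ q)) = ε p ⊗ₜ ε' q) :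
    Function.Surjective E ∧ (∀ x, E x = 0 ↔ ∃ y, D 0 y = x) ∧
      ∀ n x, D n x = 0 ↔ ∃ y, D (n + 1) y = x := by
  have hdd : ∀ i y, d i (d (i + 1) y) = 0 := by
    intro i y
    have : d (i + 1) y ∈ LinearMap.ker (d i) := by rw [hex]; exact ⟨y, rfl⟩
    exact this
  have hed : ∀ y, ε (d 0 y) = 0 := by
    intro y
    have : d 0 y ∈ LinearMap.ker ε := by rw [h0]; exact ⟨y, rfl⟩
    exact this
  have hdd' : ∀ i y, d' i (d' (i + 1) y) = 0 := by
    intro i y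
    have : d' (i + 1) y ∈ LinearMap.ker (d' i) := by rw [hex']; exact ⟨y, rfl⟩
    exact this
  have hed' : ∀ y, ε' (d' 0 y) = 0 := by
    intro y
    have : d' 0 y ∈ LinearMap.ker ε' := by rw [h0']; exact ⟨y, rfl⟩
    exact this
  obtain ⟨σ, s, hσ, hs0, hs⟩ := aux_contract P d ε hε h0 hex
  obtain ⟨σ', s', hσ', hs0', hs'⟩ := aux_contract Q d' ε' hε' h0' hex'
  let H := auxH k P Q s s' (σ ∘ₗ ε)
  have hH0 : ∀ n j h p q, H n (auxInc k P Q n 0 j h (p ⊗ₜ q)) =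
      auxInc k P Q (n + 1) 1 j (by omega) (s 0 p ⊗ₜ q) +
      auxInc k P Q (n + 1) 0 (j + 1) (by omega) (σ (ε p) ⊗ₜ s' j q) := by
    intro n j h p q
    exact DirectSum.toModule_lof k _ _
  have hH1 : ∀ n i j h p q, H n (auxInc k P Q n (i + 1) j h (p ⊗ₜ q)) =
      auxInc k P Q (n + 1) (i + 2) j (by omega) (s (i + 1) p ⊗ₜ q) := by
    intro n i j h p q
    exact DirectSum.toModule_lof k _ _
  have hDD : ∀ n x, D n (D (n + 1) x) = 0 := by
    intro n x
    refine auxTot_ext ((D n).comp (D (n + 1))) 0 ?_ x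
    intro i j h p q
    simp only [AddMonoidHom.comp_apply, AddMonoidHom.zero_apply]
    rcases i with _ | _ | i
    · rcases j with _ | _ | j
      · omega
      · omega
      · rw [hD2, hD2, hdd']; simp
    · rcases j with _ | _ | j
      · omega
      · rw [hD1, map_add, map_zsmul, hD2, hD3]; simp
      · rw [hD1, map_add, map_zsmul, hD2, hD1, hdd']; simp
    · rcases j with _ | _ | j
      · rw [hD3, hD3, hdd]; simp
      · rw [hD1, map_add, map_zsmul, hD1, hD3, hdd]; simp [pow_succ]
      · rw [hD1, map_add, map_zsmul, hD1, hD1, hdd, hdd']; simp [pow_succ]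
  have hED : ∀ x, E (D 0 x) = 0 := by
    intro x
    refine auxTot_ext (E.comp (D 0)) 0 ?_ x
    intro i j h p q
    simp only [AddMonoidHom.comp_apply, AddMonoidHom.zero_apply]
    rcases i with _ | i
    · obtain rfl : j = 1 := by omega
      rw [hD2, hE, hed']; simp
    · obtain rfl : i = 0 := by omega
      obtain rfl : j = 0 := by omega
      rw [hD3, hE, hed]; simp
  have hDH : ∀ n x, D (n + 1) (H (n + 1) x) + H n (D n x) = x := by
    intro n x
    refine auxTot_ext ((D (n + 1)).comp (H (n + 1)).toAddMonoidHom +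
      (H n).toAddMonoidHom.comp (D n)) (AddMonoidHom.id _) ?_ x
    intro i j h p q
    simp only [AddMonoidHom.add_apply, AddMonoidHom.comp_apply, AddMonoidHom.id_apply,
      LinearMap.toAddMonoidHom_coe]
    rcases i with _ | _ | i
    · rcases j with _ | j
      · omega
      · rw [hH0, map_add, hD1, hD2, hD2, hH0, hs0, hs']
        simp only [sub_tmul, tmul_sub, map_sub]
        simp
        abel
    · rcases j with _ | j
      · rw [hH1, hD3, hD3, hH0, hs, hed]
        simp only [sub_tmul, tmul_sub, map_sub]
        simp
      · rw [hH1, hD1, hD1, map_add, map_zsmul, hH0, hH1, hs, hed]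
        simp only [sub_tmul, tmul_sub, map_sub]
        simp
        abel
    · rcases j with _ | j
      · rw [hH1, hD3, hD3, hH1, hs]
        simp only [sub_tmul, tmul_sub, map_sub]
        simp
      · rw [hH1, hD1, hD1, map_add, map_zsmul, hH1, hH1, hs]
        simp only [sub_tmul, tmul_sub, map_sub]
        simp [pow_succ]
        have key : ∀ a b c : auxTot k P Q (n + 1), a - b + -c + (b + c) = a := by
          intros
          abel
        exact key _ _ _
  have hDH0 : ∀ x, D 0 (H 0 x) + auxInc k P Q 0 0 0 rfl (TensorProduct.map σ σ' (E x)) = x := by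
    intro x
    refine auxTot_ext ((D 0).comp (H 0).toAddMonoidHom +
      (auxInc k P Q 0 0 0 rfl ∘ₗ TensorProduct.map σ σ').toAddMonoidHom.comp E)
      (AddMonoidHom.id _) ?_ x
    intro i j h p q
    obtain rfl : i = 0 := by omega
    obtain rfl : j = 0 := by omega
    simp only [AddMonoidHom.add_apply, AddMonoidHom.comp_apply, AddMonoidHom.id_apply,
      LinearMap.toAddMonoidHom_coe, LinearMap.comp_apply]
    rw [hE, hH0, map_add, hD3, hD2, hs0, hs0', TensorProduct.map_tmul]
    simp only [sub_tmul, tmul_sub, map_sub]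
    simp
  refine ⟨?_, ?_, ?_⟩
  · intro z
    induction z with
    | zero => exact ⟨0, by simp⟩
    | add x y hx hy =>
      obtain ⟨u, rfl⟩ := hx
      obtain ⟨v, rfl⟩ := hy
      exact ⟨u + v, by simp⟩
    | tmul m n => exact ⟨auxInc k P Q 0 0 0 rfl (σ m ⊗ₜ σ' n), by rw [hE, hσ, hσ']⟩
  · intro x
    constructor
    · intro hx
      refine ⟨H 0 x, ?_⟩
      have := hDH0 x
      rw [hx] at this
      simpa using this
    · rintro ⟨y, rfl⟩
      exact hED y
  · intro n x
    constructor
    · intro hx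
      refine ⟨H (n + 1) x, ?_⟩
      have := hDH n x
      rw [hx] at this
      simpa using this
    · rintro ⟨y, rfl⟩
      exact hDD n y

def auxD (k T : Type) [Field k] [Ring T] (P Q : ℕ → Type)
    [∀ i, AddCommGroup (P i)] [∀ i, Module k (P i)]
    [∀ j, AddCommGroup (Q j)] [∀ j, Module k (Q j)] [∀ i j, Module T (P i ⊗[k] Q j)]
    (f : ∀ i j, P (i + 1) ⊗[k] Q j →ₗ[T] P i ⊗[k] Q j)
    (g : ∀ i j, P i ⊗[k] Q (j + 1) →ₗ[T] P i ⊗[k] Q j) (n : ℕ) :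
    (⨁ (p : {p : ℕ × ℕ // p.1 + p.2 = n + 1}), TotTerm k P Q p) →ₗ[T]
        (⨁ (p : {p : ℕ × ℕ // p.1 + p.2 = n}), TotTerm k P Q p) :=
  DirectSum.toModule T _ _ (fun p => match p with
    | ⟨(0, 0), h⟩ => 0
    | ⟨(0, j + 1), h⟩ => DirectSum.lof T _ (TotTerm k P Q) ⟨(0, j), by omega⟩ ∘ₗ g 0 j
    | ⟨(i + 1, 0), h⟩ => DirectSum.lof T _ (TotTerm k P Q) ⟨(i, 0), by omega⟩ ∘ₗ f i 0
    | ⟨(i + 1, j + 1), h⟩ =>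
      DirectSum.lof T _ (TotTerm k P Q) ⟨(i, j + 1), by omega⟩ ∘ₗ f i (j + 1) +
      ((-1 : ℤ) ^ (i + 1)) •
        (DirectSum.lof T _ (TotTerm k P Q) ⟨(i + 1, j), by omega⟩ ∘ₗ g (i + 1) j))

def auxE (k T X : Type) [Field k] [Ring T] (P Q : ℕ → Type)
    [∀ i, AddCommGroup (P i)] [∀ i, Module k (P i)]
    [∀ j, AddCommGroup (Q j)] [∀ j, Module k (Q j)] [∀ i j, Module T (P i ⊗[k] Q j)]
    [AddCommGroup X] [Module T X] (f : P 0 ⊗[k] Q 0 →ₗ[T] X) :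
    (⨁ (p : {p : ℕ × ℕ // p.1 + p.2 = 0}), TotTerm k P Q p) →ₗ[T] X :=
  DirectSum.toModule T _ _ (fun p => match p with
    | ⟨(0, 0), h⟩ => f
    | ⟨(0, j + 1), h⟩ => 0
    | ⟨(i + 1, j), h⟩ => 0)

theorem aux_ker {T X Y Z : Type} [Ring T] [AddCommGroup X] [AddCommGroup Y] [AddCommGroup Z]
    [Module T X] [Module T Y] [Module T Z] (f : X →ₗ[T] Y) (g : Y →ₗ[T] Z)
    (h : ∀ x, g x = 0 ↔ ∃ y, f y = x) : LinearMap.ker g = LinearMap.range f := by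
  ext x
  exact h x

/-- If `P_• → M → 0` is a graded projective resolution of the graded
`Λ`-module `M` and `Q_• → N → 0` a graded projective resolution of the graded `Γ`-module
`N`, then the total complex of the double complex `P_• ⊗ᵗ Q_•` — with `n`-th term
`⊕_{i+j=n} P_i ⊗ Q_j`, differential `p ⊗ q ↦ dp ⊗ q + (-1)^i p ⊗ dq` and augmentation
`p ⊗ q ↦ ε_P(p) ⊗ ε_Q(q)` — is a graded projective resolution of `M ⊗ᵗ N` over
`T = Λ ⊗ᵗ Γ`. -/
theorem stmt7 {k A B Λ Γ T M N : Type} [Field k]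
    [AddCommGroup A] [AddCommGroup B] [DecidableEq A] [DecidableEq B]
    [Ring Λ] [Algebra k Λ] [Ring Γ] [Algebra k Γ]
    (𝒜 : A → Submodule k Λ) (ℬ : B → Submodule k Γ)
    [GradedAlgebra 𝒜] [GradedAlgebra ℬ]
    (t : A → B → kˣ)
    (ht₁ : ∀ a a' b, t (a + a') b = t a b * t a' b)
    (ht₂ : ∀ a b b', t a (b + b') = t a b * t a b')
    [Ring T] [Algebra k T] (e : (Λ ⊗[k] Γ) ≃ₗ[k] T)
    (he1 : e (1 ⊗ₜ 1) = 1)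
    (hemul : ∀ {a b} (x x' : Λ) (y y' : Γ), x' ∈ 𝒜 a → y ∈ ℬ b →
      e (x ⊗ₜ y) * e (x' ⊗ₜ y') = (t a b : k) • e ((x * x') ⊗ₜ (y * y')))
    -- the graded modules M and N
    [AddCommGroup M] [Module k M] [Module Λ M] [IsScalarTower k Λ M]
    (ℳ : A → Submodule k M) [DirectSum.Decomposition ℳ]
    (hℳ : ∀ {a a'} (l : Λ) (m : M), l ∈ 𝒜 a → m ∈ ℳ a' → l • m ∈ ℳ (a + a'))
    [AddCommGroup N] [Module k N] [Module Γ N] [IsScalarTower k Γ N]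
    (𝒩 : B → Submodule k N) [DirectSum.Decomposition 𝒩]
    (h𝒩 : ∀ {b b'} (g : Γ) (n : N), g ∈ ℬ b → n ∈ 𝒩 b' → g • n ∈ 𝒩 (b + b'))
    -- a graded projective resolution P_• of M over Λ
    (P : ℕ → Type) [∀ i, AddCommGroup (P i)] [∀ i, Module k (P i)]
    [∀ i, Module Λ (P i)] [∀ i, IsScalarTower k Λ (P i)]
    [∀ i, Module.Projective Λ (P i)]
    (𝓟 : ∀ i, A → Submodule k (P i)) [∀ i, DirectSum.Decomposition (𝓟 i)]
    (h𝓟 : ∀ i, ∀ {a a'} (l : Λ) (p : P i), l ∈ 𝒜 a → p ∈ 𝓟 i a' → l • p ∈ 𝓟 i (a + a'))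
    (dP : ∀ i, P (i + 1) →ₗ[Λ] P i) (εP : P 0 →ₗ[Λ] M)
    (hdPgr : ∀ i a, ∀ p ∈ 𝓟 (i + 1) a, dP i p ∈ 𝓟 i a)
    (hεPgr : ∀ a, ∀ p ∈ 𝓟 0 a, εP p ∈ ℳ a)
    (hεPsurj : Function.Surjective εP)
    (hPex0 : LinearMap.ker εP = LinearMap.range (dP 0))
    (hPex : ∀ i, LinearMap.ker (dP i) = LinearMap.range (dP (i + 1)))
    -- a graded projective resolution Q_• of N over Γ
    (Q : ℕ → Type) [∀ j, AddCommGroup (Q j)] [∀ j, Module k (Q j)]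
    [∀ j, Module Γ (Q j)] [∀ j, IsScalarTower k Γ (Q j)]
    [∀ j, Module.Projective Γ (Q j)]
    (𝓠 : ∀ j, B → Submodule k (Q j)) [∀ j, DirectSum.Decomposition (𝓠 j)]
    (h𝓠 : ∀ j, ∀ {b b'} (g : Γ) (q : Q j), g ∈ ℬ b → q ∈ 𝓠 j b' → g • q ∈ 𝓠 j (b + b'))
    (dQ : ∀ j, Q (j + 1) →ₗ[Γ] Q j) (εQ : Q 0 →ₗ[Γ] N)
    (hdQgr : ∀ j b, ∀ q ∈ 𝓠 (j + 1) b, dQ j q ∈ 𝓠 j b)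
    (hεQgr : ∀ b, ∀ q ∈ 𝓠 0 b, εQ q ∈ 𝒩 b)
    (hεQsurj : Function.Surjective εQ)
    (hQex0 : LinearMap.ker εQ = LinearMap.range (dQ 0))
    (hQex : ∀ j, LinearMap.ker (dQ j) = LinearMap.range (dQ (j + 1)))
    -- the twisted T-module structures on the tensor products
    [∀ i j, Module T (P i ⊗[k] Q j)] [∀ i j, IsScalarTower k T (P i ⊗[k] Q j)]
    (hactPQ : ∀ (i j : ℕ) (am : A) (bg : B) (l : Λ) (g : Γ) (p : P i) (q : Q j),
      g ∈ ℬ bg → p ∈ 𝓟 i am →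
      e (l ⊗ₜ g) • (p ⊗ₜ q : P i ⊗[k] Q j) = (t am bg : k) • ((l • p) ⊗ₜ (g • q)))
    [Module T (M ⊗[k] N)] [IsScalarTower k T (M ⊗[k] N)]
    (hactMN : ∀ (am : A) (bg : B) (l : Λ) (g : Γ) (m : M) (n : N),
      g ∈ ℬ bg → m ∈ ℳ am →
      e (l ⊗ₜ g) • (m ⊗ₜ n : M ⊗[k] N) = (t am bg : k) • ((l • m) ⊗ₜ (g • n))) :
    -- the total complex, with terms `Tot n = ⊕_{i+j=n} P i ⊗ Q j`
    ∃ (D : ∀ n : ℕ,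
        (⨁ (p : {p : ℕ × ℕ // p.1 + p.2 = n + 1}), TotTerm k P Q p) →ₗ[T]
        (⨁ (p : {p : ℕ × ℕ // p.1 + p.2 = n}), TotTerm k P Q p))
      (εT : (⨁ (p : {p : ℕ × ℕ // p.1 + p.2 = 0}), TotTerm k P Q p) →ₗ[T]
        (M ⊗[k] N)),
      -- the differential is the usual signed total differential
      (∀ (n i j : ℕ) (h : (i + 1) + (j + 1) = n + 1) (p : P (i + 1)) (q : Q (j + 1)),
        D n (DirectSum.lof T _ (TotTerm k P Q) ⟨(i + 1, j + 1), h⟩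
            (p ⊗ₜ q)) =
          DirectSum.lof T _ (TotTerm k P Q) ⟨(i, j + 1), by omega⟩
              ((dP i p) ⊗ₜ q) +
            ((-1 : ℤ) ^ (i + 1)) •
              DirectSum.lof T _ (TotTerm k P Q) ⟨(i + 1, j), by omega⟩
                (p ⊗ₜ (dQ j q))) ∧
      (∀ (n j : ℕ) (h : 0 + (j + 1) = n + 1) (p : P 0) (q : Q (j + 1)),
        D n (DirectSum.lof T _ (TotTerm k P Q) ⟨(0, j + 1), h⟩
            (p ⊗ₜ q)) =
          DirectSum.lof T _ (TotTerm k P Q) ⟨(0, j), by omega⟩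
            (p ⊗ₜ (dQ j q))) ∧
      (∀ (n i : ℕ) (h : (i + 1) + 0 = n + 1) (p : P (i + 1)) (q : Q 0),
        D n (DirectSum.lof T _ (TotTerm k P Q) ⟨(i + 1, 0), h⟩
            (p ⊗ₜ q)) =
          DirectSum.lof T _ (TotTerm k P Q) ⟨(i, 0), by omega⟩
            ((dP i p) ⊗ₜ q)) ∧
      -- the augmentation is `ε_P ⊗ ε_Q`
      (∀ (p : P 0) (q : Q 0),
        εT (DirectSum.lof T _ (TotTerm k P Q) ⟨(0, 0), rfl⟩ (p ⊗ₜ q)) =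
          (εP p) ⊗ₜ (εQ q)) ∧
      -- each term is a projective T-module
      (∀ n : ℕ, Module.Projective T
        (⨁ (p : {p : ℕ × ℕ // p.1 + p.2 = n}), TotTerm k P Q p)) ∧
      -- exactness: a resolution of `M ⊗ᵗ N`
      Function.Surjective εT ∧
      LinearMap.ker εT = LinearMap.range (D 0) ∧
      (∀ n, LinearMap.ker (D n) = LinearMap.range (D (n + 1))) := by
  have hmapP : ∀ i j (s : T) (z : P (i + 1) ⊗[k] Q j),
      TensorProduct.map ((dP i).restrictScalars k) LinearMap.id (s • z) =
        s • (TensorProduct.map ((dP i).restrictScalars k) LinearMap.id z : P i ⊗[k] Q j) := by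
    intro i j
    apply aux_tlin ℬ e (𝓟 (i + 1))
    intro a b l g p q hg hp
    rw [hactPQ _ _ a b l g p q hg hp, map_smul, TensorProduct.map_tmul, TensorProduct.map_tmul]
    simp only [LinearMap.coe_restrictScalars, LinearMap.id_apply, map_smul]
    rw [hactPQ _ _ a b l g _ q hg (hdPgr i a p hp)]
  have hmapQ : ∀ i j (s : T) (z : P i ⊗[k] Q (j + 1)),
      TensorProduct.map LinearMap.id ((dQ j).restrictScalars k) (s • z) =
        s • (TensorProduct.map LinearMap.id ((dQ j).restrictScalars k) z : P i ⊗[k] Q j) := by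
    intro i j
    apply aux_tlin ℬ e (𝓟 i)
    intro a b l g p q hg hp
    rw [hactPQ _ _ a b l g p q hg hp, map_smul, TensorProduct.map_tmul, TensorProduct.map_tmul]
    simp only [LinearMap.coe_restrictScalars, LinearMap.id_apply, map_smul]
    rw [hactPQ _ _ a b l g p _ hg hp]
  have hmapE : ∀ (s : T) (z : P 0 ⊗[k] Q 0),
      TensorProduct.map (εP.restrictScalars k) (εQ.restrictScalars k) (s • z) =
        s • (TensorProduct.map (εP.restrictScalars k) (εQ.restrictScalars k) z : M ⊗[k] N) := by
    apply aux_tlin ℬ e (𝓟 0)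
    intro a b l g p q hg hp
    rw [hactPQ _ _ a b l g p q hg hp, map_smul, TensorProduct.map_tmul, TensorProduct.map_tmul]
    simp only [LinearMap.coe_restrictScalars, map_smul]
    rw [hactMN a b l g _ _ hg (hεPgr a p hp)]
  let f : ∀ i j, P (i + 1) ⊗[k] Q j →ₗ[T] P i ⊗[k] Q j := fun i j =>
    { TensorProduct.map ((dP i).restrictScalars k) LinearMap.id with map_smul' := hmapP i j }
  let g : ∀ i j, P i ⊗[k] Q (j + 1) →ₗ[T] P i ⊗[k] Q j := fun i j =>
    { TensorProduct.map LinearMap.id ((dQ j).restrictScalars k) with map_smul' := hmapQ i j }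
  let ee : P 0 ⊗[k] Q 0 →ₗ[T] M ⊗[k] N :=
    { TensorProduct.map (εP.restrictScalars k) (εQ.restrictScalars k) with map_smul' := hmapE }
  let D := auxD k T P Q f g
  let E := auxE k T (M ⊗[k] N) P Q ee
  have hD1 : ∀ (n i j : ℕ) (h : (i + 1) + (j + 1) = n + 1) (p : P (i + 1)) (q : Q (j + 1)),
        D n (DirectSum.lof T _ (TotTerm k P Q) ⟨(i + 1, j + 1), h⟩
            (p ⊗ₜ q)) =
          DirectSum.lof T _ (TotTerm k P Q) ⟨(i, j + 1), by omega⟩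
              ((dP i p) ⊗ₜ q) +
            ((-1 : ℤ) ^ (i + 1)) •
              DirectSum.lof T _ (TotTerm k P Q) ⟨(i + 1, j), by omega⟩
                (p ⊗ₜ (dQ j q)) := by
    intro n i j h p q
    exact DirectSum.toModule_lof T _ _
  have hD2 : ∀ (n j : ℕ) (h : 0 + (j + 1) = n + 1) (p : P 0) (q : Q (j + 1)),
        D n (DirectSum.lof T _ (TotTerm k P Q) ⟨(0, j + 1), h⟩
            (p ⊗ₜ q)) =
          DirectSum.lof T _ (TotTerm k P Q) ⟨(0, j), by omega⟩
            (p ⊗ₜ (dQ j q)) := by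
    intro n j h p q
    exact DirectSum.toModule_lof T _ _
  have hD3 : ∀ (n i : ℕ) (h : (i + 1) + 0 = n + 1) (p : P (i + 1)) (q : Q 0),
        D n (DirectSum.lof T _ (TotTerm k P Q) ⟨(i + 1, 0), h⟩
            (p ⊗ₜ q)) =
          DirectSum.lof T _ (TotTerm k P Q) ⟨(i, 0), by omega⟩
            ((dP i p) ⊗ₜ q) := by
    intro n i h p q
    exact DirectSum.toModule_lof T _ _
  have hE : ∀ (p : P 0) (q : Q 0),
        E (DirectSum.lof T _ (TotTerm k P Q) ⟨(0, 0), rfl⟩ (p ⊗ₜ q)) =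
          (εP p) ⊗ₜ (εQ q) := by
    intro p q
    exact DirectSum.toModule_lof T _ _
  have hproj : ∀ i j, Module.Projective T (P i ⊗[k] Q j) := fun i j =>
    aux_proj 𝒜 ℬ t ht₁ ht₂ e hemul (𝓟 i) (h𝓟 i) (hactPQ i j)
  have hker : ∀ {X Y Z : Type} [AddCommGroup X] [AddCommGroup Y] [AddCommGroup Z]
      {R : Type} [Ring R] [Algebra k R] [Module k X] [Module k Y] [Module k Z]
      [Module R X] [Module R Y] [Module R Z] [IsScalarTower k R X] [IsScalarTower k R Y]
      [IsScalarTower k R Z] (u : X →ₗ[R] Y) (v : Y →ₗ[R] Z),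
      LinearMap.ker v = LinearMap.range u →
      LinearMap.ker (v.restrictScalars k) = LinearMap.range (u.restrictScalars k) := by
    intro X Y Z _ _ _ R _ _ _ _ _ _ _ _ _ _ _ u v h
    ext x
    exact SetLike.ext_iff.1 h x
  obtain ⟨h1, h2, h3⟩ := aux_exact P Q (fun i => (dP i).restrictScalars k) (εP.restrictScalars k)
    hεPsurj (hker _ _ hPex0) (fun i => hker _ _ (hPex i))
    (fun i => (dQ i).restrictScalars k) (εQ.restrictScalars k)
    hεQsurj (hker _ _ hQex0) (fun i => hker _ _ (hQex i))
    (fun n => (D n).toAddMonoidHom) E.toAddMonoidHom hD1 hD2 hD3 hE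
  exact ⟨D, E, hD1, hD2, hD3, hE, fun n => inferInstance, h1, aux_ker _ _ h2,
    fun n => aux_ker _ _ (h3 n)⟩
end

section
/- For a ∈ A and b ∈ B, the map (l ⊗ g) ⊗ (l' ⊗ g') ↦ t⟨|l'|,|g|⟩ t⟨a,|g|⟩ t⟨|l'|,b⟩ (l ⊗ l') ⊗ (g ⊗ g') is an isomorphism of graded (Λ ⊗_k^t Γ)^e-modules from (Λ ⊗_k^t Γ)^e⟨a,b⟩ to Λ^e⟨a⟩ ⊗_k^t Γ^e⟨b⟩. In particular the twisted tensor product of a graded projective Λ^e-module and a graded projective Γ^e-module is a graded projective (Λ ⊗_k^t Γ)^e-module. -/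
open TensorProduct MulOpposite

/-- homogeneous families that span and along which linear maps can be glued -/
def Gl (k : Type) [Field k] {I M : Type} [AddCommGroup M] [Module k M] (H : I → Set M) : Prop :=
  (Submodule.span k (⋃ i, H i) = ⊤) ∧
  ∀ (N : Type) [AddCommGroup N] [Module k N] (f : I → M →ₗ[k] N),
    ∃ h : M →ₗ[k] N, ∀ i, ∀ m ∈ H i, h m = f i m

section
variable {k : Type} [Field k] {I J M N L : Type} [AddCommGroup M] [Module k M]
  [AddCommGroup N] [Module k N] [AddCommGroup L] [Module k L]

theorem Gl.ext {N : Type} [AddCommMonoid N] [Module k N] {H : I → Set M} (hH : Gl k H) {f g : M →ₗ[k] N}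
    (h : ∀ i, ∀ m ∈ H i, f m = g m) : f = g := by
  apply LinearMap.ext_on hH.1
  intro x hx
  obtain ⟨i, hi⟩ := Set.mem_iUnion.1 hx
  exact h i x hi

theorem Gl.of_dec [DecidableEq I] (𝓜 : I → Submodule k M) [DirectSum.Decomposition 𝓜] :
    Gl k (fun i => (𝓜 i : Set M)) := by
  constructor
  · rw [← Submodule.iSup_eq_span]
    exact (DirectSum.Decomposition.isInternal 𝓜).submodule_iSup_eq_top
  · intro N _ _ f
    refine ⟨(DirectSum.toModule k I N (fun i => (f i).comp (𝓜 i).subtype)).comp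
      (DirectSum.decomposeLinearEquiv 𝓜).toLinearMap, ?_⟩
    intro i m hm
    simp only [LinearMap.comp_apply, LinearEquiv.coe_coe, DirectSum.decomposeLinearEquiv_apply]
    rw [DirectSum.decompose_of_mem 𝓜 hm]
    erw [DirectSum.toModule_lof]
    rfl

theorem Gl.map {H : I → Set M} (hH : Gl k H) (e : M ≃ₗ[k] N) :
    Gl k (fun i => e '' (H i)) := by
  constructor
  · rw [← Set.image_iUnion]
    have := Submodule.map_span (e : M →ₗ[k] N) (⋃ i, H i)
    rw [hH.1, Submodule.map_top, LinearEquiv.range] at this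
    exact this.symm
  · intro L _ _ f
    obtain ⟨h, hh⟩ := hH.2 L (fun i => (f i).comp (e : M →ₗ[k] N))
    refine ⟨h.comp (e.symm : N →ₗ[k] M), ?_⟩
    rintro i _ ⟨m, hm, rfl⟩
    simp [hh i m hm]

theorem Gl.tensor {H : I → Set M} {H' : J → Set N} (hH : Gl k H) (hH' : Gl k H') :
    Gl k (fun ij : I × J => {z : M ⊗[k] N | ∃ m ∈ H ij.1, ∃ n ∈ H' ij.2, z = m ⊗ₜ n}) := by
  constructor
  · rw [eq_top_iff, ← TensorProduct.map₂_mk_top_top_eq_top, ← hH.1, ← hH'.1,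
      Submodule.map₂_span_span]
    apply Submodule.span_mono
    rintro _ ⟨m, hm, n, hn, rfl⟩
    obtain ⟨i, hi⟩ := Set.mem_iUnion.1 hm
    obtain ⟨j, hj⟩ := Set.mem_iUnion.1 hn
    exact Set.mem_iUnion.2 ⟨(i, j), m, hi, n, hj, rfl⟩
  · intro L _ _ f
    have h1 : ∀ i, ∃ h : N →ₗ[k] (M →ₗ[k] L), ∀ j, ∀ n ∈ H' j,
        h n = (TensorProduct.curry (f (i, j))).flip n := fun i => hH'.2 _ _
    choose h1 hh1 using h1
    obtain ⟨h2, hh2⟩ := hH.2 _ (fun i => (h1 i).flip)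
    refine ⟨TensorProduct.lift h2, ?_⟩
    rintro ⟨i, j⟩ _ ⟨m, hm, n, hn, rfl⟩
    simp [hh2 i m hm, hh1 i j n hn]

/-- the action map -/
theorem exists_act (R : Type) [Ring R] [Algebra k R] [Module R M] [IsScalarTower k R M] :
    ∃ μ : R ⊗[k] M →ₗ[R] M, ∀ r m, μ (r ⊗ₜ m) = r • m := by
  refine ⟨TensorProduct.AlgebraTensorModule.lift
    ({ toFun := fun r => { toFun := fun m => r • m, map_add' := by simp, map_smul' := ?_ }
       map_add' := ?_
       map_smul' := ?_ }), ?_⟩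
  · intro c m
    simp only [RingHom.id_apply]
    rw [← algebraMap_smul R c m, ← algebraMap_smul R c (r • m), smul_smul, smul_smul,
      Algebra.commutes]
  · intro x y; ext m; simp [add_smul]
  · intro x y; ext m; simp [mul_smul]
  · intro r m; simp

theorem graded_section {S : Type} {E : Type} [Ring E] [Algebra k E]
    [Module E M] [IsScalarTower k E M] [Module.Projective E M]
    {HE : I → Set E} (hE : Gl k HE) (dE : I → S → kˣ)
    (hmul : ∀ i j, ∀ x ∈ HE i, ∀ y ∈ HE j, ∃ l, x * y ∈ HE l ∧ dE l = dE i * dE j)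
    {HM : J → Set M} (hM : Gl k HM) (dM : J → S → kˣ)
    (hgr : ∀ s (D : M →ₗ[k] M), (∀ j, ∀ m ∈ HM j, D m = (dM j s : k) • m) →
      ∀ i j, ∀ x ∈ HE i, ∀ m ∈ HM j, D (x • m) = ((dE i s : k) * (dM j s : k)) • (x • m))
    (μ : E ⊗[k] M →ₗ[E] M) (hμ : ∀ x m, μ (x ⊗ₜ m) = x • m) :
    ∃ σ : M →ₗ[E] E ⊗[k] M, (∀ m, μ (σ m) = m) ∧
      ∀ s (D : E ⊗[k] M →ₗ[k] E ⊗[k] M),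
        (∀ i j, ∀ x ∈ HE i, ∀ m ∈ HM j,
          D (x ⊗ₜ m) = ((dE i s : k) * (dM j s : k)) • (x ⊗ₜ m)) →
        ∀ j, ∀ m ∈ HM j, D (σ m) = (dM j s : k) • σ m := by
  classical
  obtain ⟨s, hs⟩ := Module.projective_lifting_property μ LinearMap.id
    (fun m => ⟨1 ⊗ₜ m, by simp [hμ]⟩)
  replace hs : ∀ m, μ (s m) = m := fun m => LinearMap.congr_fun hs m
  have hF := hE.tensor hM
  obtain ⟨δM, hδM⟩ := hM.2 ((S → kˣ) →₀ M) (fun j => Finsupp.lsingle (dM j))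
  obtain ⟨δF, hδF⟩ := hF.2 ((S → kˣ) →₀ (E ⊗[k] M))
    (fun ij => Finsupp.lsingle (dE ij.1 * dM ij.2))
  simp only [Finsupp.lsingle_apply] at hδM hδF
  have hδF' : ∀ i j, ∀ x ∈ HE i, ∀ m ∈ HM j,
      δF (x ⊗ₜ m) = Finsupp.single (dE i * dM j) (x ⊗ₜ m) :=
    fun i j x hx m hm => hδF (i, j) _ ⟨x, hx, m, hm, rfl⟩
  -- counit
  have hco : (Finsupp.lsum k (fun _ : S → kˣ => (LinearMap.id : M →ₗ[k] M))) ∘ₗ δM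
      = LinearMap.id := by
    apply hM.ext
    intro j m hm
    simp [hδM j m hm]
  have hgr' : ∀ i j, ∀ x ∈ HE i, ∀ m ∈ HM j,
      δM (x • m) = Finsupp.single (dE i * dM j) (x • m) := by
    intro i j x hx m hm
    have hz : ∀ c, c ≠ dE i * dM j → δM (x • m) c = 0 := by
      intro c hc
      obtain ⟨b, hb⟩ := Function.ne_iff.1 hc
      obtain ⟨D, hD⟩ := hM.2 M (fun j => (dM j b : k) • LinearMap.id)
      have h1 := hgr b D (by intro j m hm; simp [hD j m hm]) i j x hx m hm
      have h2 : (Finsupp.lapply c ∘ₗ δM) ∘ₗ D = (c b : k) • (Finsupp.lapply c ∘ₗ δM) := by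
        apply hM.ext
        intro j' m' hm'
        by_cases h : dM j' = c
        · subst h; simp [hD j' m' hm']
        · simp [hD j' m' hm', hδM j' m' hm', h]
      have h3 := LinearMap.congr_fun h2 (x • m)
      simp only [LinearMap.comp_apply, h1, map_smul, LinearMap.smul_apply,
        Finsupp.lapply_apply] at h3
      rw [← sub_eq_zero, ← sub_smul, smul_eq_zero] at h3
      rcases h3 with h3 | h3
      · exfalso
        apply hb
        ext
        simp only [Pi.mul_apply, Units.val_mul]
        exact (sub_eq_zero.1 h3).symm
      · exact h3
    have h4 : δM (x • m) = Finsupp.single (dE i * dM j) (δM (x • m) (dE i * dM j)) := by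
      ext c
      by_cases h : c = dE i * dM j
      · subst h; simp
      · rw [hz c h, Finsupp.single_eq_of_ne h]
    have h5 := LinearMap.congr_fun hco (x • m)
    rw [LinearMap.comp_apply, h4] at h5
    simp only [Finsupp.coe_lsum, LinearMap.id_coe, id_eq, Finsupp.sum_single_index] at h5
    rw [h4, h5]
  -- compatibilities of δF
  have hFE : ∀ i, ∀ x ∈ HE i, ∀ c f, δF (x • f) (dE i * c) = x • δF f c := by
    intro i x hx c f
    have : (Finsupp.lapply (dE i * c) ∘ₗ δF) ∘ₗ (Algebra.lsmul k k (E ⊗[k] M) x)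
        = (Algebra.lsmul k k (E ⊗[k] M) x) ∘ₗ (Finsupp.lapply c ∘ₗ δF) := by
      apply hF.ext
      rintro ⟨i', j⟩ _ ⟨y, hy, m, hm, rfl⟩
      obtain ⟨l, hl, hl'⟩ := hmul i i' x hx y hy
      simp only [LinearMap.comp_apply, Algebra.lsmul_coe, Finsupp.lapply_apply,
        TensorProduct.smul_tmul', smul_eq_mul]
      rw [hδF' l j _ hl m hm, hδF' i' j y hy m hm, hl', mul_assoc]
      by_cases h : dE i' * dM j = c
      · subst h; simp [TensorProduct.smul_tmul']
      · rw [Finsupp.single_eq_of_ne, Finsupp.single_eq_of_ne, smul_zero]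
        · exact fun h' => h h'.symm
        · exact fun h' => h (mul_left_cancel h').symm
    exact LinearMap.congr_fun this f
  have hFμ : ∀ c f, δM (μ f) c = μ (δF f c) := by
    intro c f
    have : (Finsupp.lapply c ∘ₗ δM) ∘ₗ (μ.restrictScalars k)
        = (μ.restrictScalars k) ∘ₗ (Finsupp.lapply c ∘ₗ δF) := by
      apply hF.ext
      rintro ⟨i', j⟩ _ ⟨y, hy, m, hm, rfl⟩
      simp only [LinearMap.comp_apply, LinearMap.restrictScalars_apply, Finsupp.lapply_apply, hμ]
      rw [hδF' i' j y hy m hm, hgr' i' j y hy m hm]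
      by_cases h : dE i' * dM j = c
      · subst h; simp [hμ]
      · rw [Finsupp.single_eq_of_ne, Finsupp.single_eq_of_ne, map_zero] <;>
        exact fun h' => h h'.symm
    exact LinearMap.congr_fun this f
  let σ : M →ₗ[k] E ⊗[k] M :=
    (Finsupp.lsum k (fun c => (Finsupp.lapply c ∘ₗ δF) ∘ₗ (s.restrictScalars k))) ∘ₗ δM
  have hσ : ∀ c m, δM m = Finsupp.single c m → σ m = δF (s m) c := by
    intro c m h
    simp only [σ, LinearMap.comp_apply, h, Finsupp.coe_lsum]
    rw [Finsupp.sum_single_index (by simp)]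
    rfl
  have hlin : ∀ (x : E) (m : M), σ (x • m) = x • σ m := by
    intro x m
    have h1 : ∀ i, ∀ x ∈ HE i, σ ∘ₗ (Algebra.lsmul k k M x)
        = (Algebra.lsmul k k (E ⊗[k] M) x) ∘ₗ σ := by
      intro i x hx
      apply hM.ext
      intro j m hm
      simp only [LinearMap.comp_apply, Algebra.lsmul_coe]
      rw [hσ _ _ (hgr' i j x hx m hm), hσ _ _ (hδM j m hm), map_smul, hFE i x hx]
    have h2 : σ ∘ₗ (LinearMap.toSpanSingleton E M m).restrictScalars k
        = (LinearMap.toSpanSingleton E (E ⊗[k] M) (σ m)).restrictScalars k := by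
      apply hE.ext
      intro i x hx
      simpa using LinearMap.congr_fun (h1 i x hx) m
    simpa using LinearMap.congr_fun h2 x
  refine ⟨{ toFun := σ, map_add' := σ.map_add, map_smul' := hlin }, ?_, ?_⟩
  · intro m
    have : (μ.restrictScalars k) ∘ₗ σ = LinearMap.id := by
      apply hM.ext
      intro j m hm
      simp only [LinearMap.comp_apply, LinearMap.restrictScalars_apply, LinearMap.id_apply]
      rw [hσ _ _ (hδM j m hm), ← hFμ, hs, hδM j m hm, Finsupp.single_eq_same]
    exact LinearMap.congr_fun this m
  · intro b D hD j m hm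
    change D (σ m) = _ • σ m
    rw [hσ _ _ (hδM j m hm)]
    have : D ∘ₗ (Finsupp.lapply (dM j) ∘ₗ δF) = (dM j b : k) • (Finsupp.lapply (dM j) ∘ₗ δF) := by
      apply hF.ext
      rintro ⟨i', j'⟩ _ ⟨y, hy, m, hm, rfl⟩
      simp only [LinearMap.comp_apply, LinearMap.smul_apply, Finsupp.lapply_apply]
      rw [hδF' i' j' y hy m hm]
      by_cases h : dE i' * dM j' = dM j
      · rw [h, Finsupp.single_eq_same, hD i' j' y hy m hm, ← h]; simp
      · rw [Finsupp.single_eq_of_ne, smul_zero, map_zero]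
        exact fun h' => h h'.symm
    exact LinearMap.congr_fun this (s m)
end

theorem tmul_cancel {k M N : Type} [Field k] [AddCommGroup M] [Module k M]
    [AddCommGroup N] [Module k N] {m m' : M} {v : N} (hv : v ≠ 0)
    (h : m ⊗ₜ[k] v = m' ⊗ₜ[k] v) : m = m' := by
  obtain ⟨φ, hφ⟩ : ∃ φ : N →ₗ[k] k, φ v ≠ 0 := by
    by_contra! hc
    exact hv ((Module.forall_dual_apply_eq_zero_iff k v).1 hc)
  have := congrArg (fun z => TensorProduct.rid k M (LinearMap.lTensor M φ z)) h
  simp only [LinearMap.lTensor_tmul, TensorProduct.rid_tmul] at this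
  exact smul_right_injective M hφ this

theorem tmul_cancel' {k M N : Type} [Field k] [AddCommGroup M] [Module k M]
    [AddCommGroup N] [Module k N] {m m' : M} {v : N} (hv : v ≠ 0)
    (h : v ⊗ₜ[k] m = v ⊗ₜ[k] m') : m = m' := by
  apply tmul_cancel (k := k) hv
  have := congrArg (TensorProduct.comm k N M) h
  simpa using this

set_option synthInstance.maxHeartbeats 400000 in
set_option maxHeartbeats 1000000 in
/-- For `a ∈ A` and `b ∈ B`, the map
`(l ⊗ g) ⊗ (l' ⊗ g') ↦ t⟨|l'|,|g|⟩ t⟨a,|g|⟩ t⟨|l'|,b⟩ (l ⊗ l') ⊗ (g ⊗ g')` is an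
isomorphism of graded `(Λ ⊗ᵗ Γ)ᵉ`-modules `(Λ ⊗ᵗ Γ)ᵉ⟨a,b⟩ ≅ Λᵉ⟨a⟩ ⊗ᵗ Γᵉ⟨b⟩`.
In particular, the twisted tensor product of a graded projective `Λᵉ`-module `P` and a
graded projective `Γᵉ`-module `Q` is a graded projective `(Λ ⊗ᵗ Γ)ᵉ`-module.
Here `R = T ⊗[k] Tᵐᵒᵖ` is the enveloping algebra of `T = Λ ⊗ᵗ Γ` (acting on itself by
left/right multiplication; shifting does not change the module structure), and
`W = (Λ ⊗[k] Λᵐᵒᵖ) ⊗[k] (Γ ⊗[k] Γᵐᵒᵖ)` is the underlying space of `Λᵉ⟨a⟩ ⊗ᵗ Γᵉ⟨b⟩`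
with the hypothesised twisted `R`-action `hW`. -/
theorem stmt10 {k A B Λ Γ T P Q : Type} [Field k]
    [AddCommGroup A] [AddCommGroup B] [DecidableEq A] [DecidableEq B]
    [Ring Λ] [Algebra k Λ] [Ring Γ] [Algebra k Γ]
    (𝒜 : A → Submodule k Λ) (ℬ : B → Submodule k Γ)
    [GradedAlgebra 𝒜] [GradedAlgebra ℬ]
    (t : A → B → kˣ)
    (ht₁ : ∀ a a' b, t (a + a') b = t a b * t a' b)
    (ht₂ : ∀ a b b', t a (b + b') = t a b * t a b')
    [Ring T] [Algebra k T] (e : (Λ ⊗[k] Γ) ≃ₗ[k] T)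
    (he1 : e (1 ⊗ₜ 1) = 1)
    (hemul : ∀ {a b} (x x' : Λ) (y y' : Γ), x' ∈ 𝒜 a → y ∈ ℬ b →
      e (x ⊗ₜ y) * e (x' ⊗ₜ y') = (t a b : k) • e ((x * x') ⊗ₜ (y * y')))
    (a : A) (b : B)
    -- the twisted `R = T ⊗ Tᵐᵒᵖ`-module structure on `W`, i.e. on `Λᵉ⟨a⟩ ⊗ᵗ Γᵉ⟨b⟩`
    [Module (T ⊗[k] Tᵐᵒᵖ) ((Λ ⊗[k] Λᵐᵒᵖ) ⊗[k] (Γ ⊗[k] Γᵐᵒᵖ))]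
    [IsScalarTower k (T ⊗[k] Tᵐᵒᵖ) ((Λ ⊗[k] Λᵐᵒᵖ) ⊗[k] (Γ ⊗[k] Γᵐᵒᵖ))]
    (hW : ∀ (a1 a2 al : A) (b1 b2 bg : B) (l l' p p' : Λ) (g g' u u' : Γ),
      l' ∈ 𝒜 al → g ∈ ℬ bg → p ∈ 𝒜 a1 → p' ∈ 𝒜 a2 → u ∈ ℬ b1 → u' ∈ ℬ b2 →
      (((e (l ⊗ₜ g)) ⊗ₜ op (e (l' ⊗ₜ g')) : T ⊗[k] Tᵐᵒᵖ)) •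
          (((p ⊗ₜ op p') ⊗ₜ (u ⊗ₜ op u')) : (Λ ⊗[k] Λᵐᵒᵖ) ⊗[k] (Γ ⊗[k] Γᵐᵒᵖ)) =
        ((t (a1 + a2 + a) bg : k) * (t al (b1 + b2 + b) : k) * (t al bg : k)) •
          ((((l * p) ⊗ₜ op (p' * l')) ⊗ₜ ((g * u) ⊗ₜ op (u' * g'))) : (Λ ⊗[k] Λᵐᵒᵖ) ⊗[k] (Γ ⊗[k] Γᵐᵒᵖ)))
    -- P a graded projective `Λᵉ`-module, Q a graded projective `Γᵉ`-module
    [AddCommGroup P] [Module k P] [Module (Λ ⊗[k] Λᵐᵒᵖ) P]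
    [IsScalarTower k (Λ ⊗[k] Λᵐᵒᵖ) P]
    (𝓟 : A → Submodule k P) [DirectSum.Decomposition 𝓟]
    [Module.Projective (Λ ⊗[k] Λᵐᵒᵖ) P]
    [AddCommGroup Q] [Module k Q] [Module (Γ ⊗[k] Γᵐᵒᵖ) Q]
    [IsScalarTower k (Γ ⊗[k] Γᵐᵒᵖ) Q]
    (𝓠 : B → Submodule k Q) [DirectSum.Decomposition 𝓠]
    [Module.Projective (Γ ⊗[k] Γᵐᵒᵖ) Q]
    -- the twisted `R`-module structure on `P ⊗ᵗ Q`
    [Module (T ⊗[k] Tᵐᵒᵖ) (P ⊗[k] Q)]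
    [IsScalarTower k (T ⊗[k] Tᵐᵒᵖ) (P ⊗[k] Q)]
    (hPQ : ∀ (px al : A) (qy bg : B) (l l' : Λ) (g g' : Γ) (p : P) (q : Q),
      l' ∈ 𝒜 al → g ∈ ℬ bg → p ∈ 𝓟 px → q ∈ 𝓠 qy →
      (((e (l ⊗ₜ g)) ⊗ₜ op (e (l' ⊗ₜ g')) : T ⊗[k] Tᵐᵒᵖ)) • ((p ⊗ₜ q) : P ⊗[k] Q) =
        ((t px bg : k) * (t al qy : k) * (t al bg : k)) •
          ((((l ⊗ₜ op l' : Λ ⊗[k] Λᵐᵒᵖ)) • p) ⊗ₜ[k] (((g ⊗ₜ op g' : Γ ⊗[k] Γᵐᵒᵖ)) • q))) :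
    -- the main isomorphism
    (∃ f : (T ⊗[k] Tᵐᵒᵖ) ≃ₗ[T ⊗[k] Tᵐᵒᵖ]
        ((Λ ⊗[k] Λᵐᵒᵖ) ⊗[k] (Γ ⊗[k] Γᵐᵒᵖ)),
      ∀ (al : A) (bg : B) (l l' : Λ) (g g' : Γ), l' ∈ 𝒜 al → g ∈ ℬ bg →
        f (((e (l ⊗ₜ g)) ⊗ₜ op (e (l' ⊗ₜ g')) : T ⊗[k] Tᵐᵒᵖ)) =
          ((t al bg : k) * (t a bg : k) * (t al b : k)) •
            (((l ⊗ₜ op l') ⊗ₜ (g ⊗ₜ op g')) : (Λ ⊗[k] Λᵐᵒᵖ) ⊗[k] (Γ ⊗[k] Γᵐᵒᵖ))) ∧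
    -- in particular: the twisted tensor product `P ⊗ᵗ Q` is projective
    Module.Projective (T ⊗[k] Tᵐᵒᵖ) (P ⊗[k] Q) := by
  classical
  have t0l : ∀ b, t 0 b = 1 := by
    intro b
    have := ht₁ 0 0 b
    simpa using this
  have t0r : ∀ a, t a 0 = 1 := by
    intro a
    have := ht₂ a 0 0
    simpa using this
  have one𝒜 : (1 : Λ) ∈ 𝒜 0 := SetLike.GradedOne.one_mem
  have oneℬ : (1 : Γ) ∈ ℬ 0 := SetLike.GradedOne.one_mem
  have glΛ := Gl.of_dec (k := k) 𝒜
  have glΓ := Gl.of_dec (k := k) ℬ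
  have glP := Gl.of_dec (k := k) 𝓟
  have glQ := Gl.of_dec (k := k) 𝓠
  have glΛe := glΛ.tensor (glΛ.map (opLinearEquiv k))
  have glΓe := glΓ.tensor (glΓ.map (opLinearEquiv k))
  have glW := glΛe.tensor glΓe
  have glT := (glΛ.tensor glΓ).map e
  have glR := glT.tensor (glT.map (opLinearEquiv k))
  let Θ : ((Λ ⊗[k] Λᵐᵒᵖ) ⊗[k] (Γ ⊗[k] Γᵐᵒᵖ)) →ₗ[k] (T ⊗[k] Tᵐᵒᵖ) :=
    (TensorProduct.map e.toLinearMap ((opLinearEquiv k).toLinearMap ∘ₗ e.toLinearMap ∘ₗ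
      (TensorProduct.map (opLinearEquiv k).symm.toLinearMap
        (opLinearEquiv k).symm.toLinearMap))) ∘ₗ
      (TensorProduct.tensorTensorTensorComm k Λ Λᵐᵒᵖ Γ Γᵐᵒᵖ).toLinearMap
  have hΘ : ∀ l l' g g', Θ ((l ⊗ₜ op l') ⊗ₜ (g ⊗ₜ op g')) =
      e (l ⊗ₜ g) ⊗ₜ op (e (l' ⊗ₜ g')) := by
    intro l l' g g'
    simp [Θ]
  refine ⟨?_, ?_⟩
  · -- part 1
    let f := LinearMap.toSpanSingleton (T ⊗[k] Tᵐᵒᵖ)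
      ((Λ ⊗[k] Λᵐᵒᵖ) ⊗[k] (Γ ⊗[k] Γᵐᵒᵖ)) ((1 ⊗ₜ op 1) ⊗ₜ (1 ⊗ₜ op 1))
    have hf : ∀ (al : A) (bg : B) (l l' : Λ) (g g' : Γ), l' ∈ 𝒜 al → g ∈ ℬ bg →
        f (((e (l ⊗ₜ g)) ⊗ₜ op (e (l' ⊗ₜ g')) : T ⊗[k] Tᵐᵒᵖ)) =
          ((t al bg : k) * (t a bg : k) * (t al b : k)) •
            (((l ⊗ₜ op l') ⊗ₜ (g ⊗ₜ op g')) : (Λ ⊗[k] Λᵐᵒᵖ) ⊗[k] (Γ ⊗[k] Γᵐᵒᵖ)) := by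
      intro al bg l l' g g' hl hg
      simp only [f, LinearMap.toSpanSingleton_apply]
      rw [hW 0 0 al 0 0 bg l l' 1 1 g g' 1 1 hl hg one𝒜 one𝒜 oneℬ oneℬ]
      simp only [mul_one, one_mul, zero_add]
      congr 1
      ring
    obtain ⟨θ, hθ⟩ := glW.2 (T ⊗[k] Tᵐᵒᵖ) (fun i =>
      ((t i.1.2 i.2.1 : k) * (t a i.2.1 : k) * (t i.1.2 b : k))⁻¹ • Θ)
    have hθ' : ∀ (i al : A) (bg j : B) (l l' : Λ) (g g' : Γ), l ∈ 𝒜 i → l' ∈ 𝒜 al → g ∈ ℬ bg →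
        g' ∈ ℬ j → θ ((l ⊗ₜ op l') ⊗ₜ (g ⊗ₜ op g')) =
        ((t al bg : k) * (t a bg : k) * (t al b : k))⁻¹ • (e (l ⊗ₜ g) ⊗ₜ op (e (l' ⊗ₜ g'))) := by
      intro i al bg j l l' g g' hl hl' hg hg'
      refine (hθ ((i, al), (bg, j)) _ ⟨_, ⟨l, hl, _, ⟨l', hl', rfl⟩, rfl⟩, _,
        ⟨g, hg, _, ⟨g', hg', rfl⟩, rfl⟩, rfl⟩).trans ?_
      simp only [coe_opLinearEquiv, LinearMap.smul_apply, hΘ]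
    have h1 : θ ∘ₗ (f.restrictScalars k) = LinearMap.id := by
      apply glR.ext
      rintro ⟨⟨i, bg⟩, ⟨al, j⟩⟩ _ ⟨_, ⟨_, ⟨l, hl, g, hg, rfl⟩, rfl⟩, _,
        ⟨_, ⟨_, ⟨l', hl', g', hg', rfl⟩, rfl⟩, rfl⟩, rfl⟩
      simp only [coe_opLinearEquiv, LinearMap.comp_apply, LinearMap.restrictScalars_apply,
        LinearMap.id_apply]
      rw [hf al bg l l' g g' hl' hg, map_smul, hθ' i al bg j l l' g g' hl hl' hg hg', smul_smul,
        mul_inv_cancel₀ (by simp), one_smul]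
    have h2 : (f.restrictScalars k) ∘ₗ θ = LinearMap.id := by
      apply glW.ext
      rintro ⟨⟨i, al⟩, ⟨bg, j⟩⟩ _ ⟨_, ⟨l, hl, _, ⟨l', hl', rfl⟩, rfl⟩, _,
        ⟨g, hg, _, ⟨g', hg', rfl⟩, rfl⟩, rfl⟩
      simp only [coe_opLinearEquiv, LinearMap.comp_apply, LinearMap.id_apply]
      rw [hθ' i al bg j l l' g g' hl hl' hg hg', map_smul, LinearMap.restrictScalars_apply,
        hf al bg l l' g g' hl' hg, smul_smul, inv_mul_cancel₀ (by simp), one_smul]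
    refine ⟨LinearEquiv.ofBijective f ⟨?_, ?_⟩, ?_⟩
    · exact Function.LeftInverse.injective (g := θ) (fun x => LinearMap.congr_fun h1 x)
    · exact Function.RightInverse.surjective (g := θ) (fun x => LinearMap.congr_fun h2 x)
    · intro al bg l l' g g' hl hg
      exact hf al bg l l' g g' hl hg
  · clear hW glW
    have mulR : ∀ (x y : T) (x' y' : T),
        (x ⊗ₜ op x' : T ⊗[k] Tᵐᵒᵖ) * (y ⊗ₜ op y') = (x * y) ⊗ₜ op (y' * x') := by
      intro x y x' y'
      rw [Algebra.TensorProduct.tmul_mul_tmul, op_mul]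
    have smulP : ∀ (c : k) (r : Λ ⊗[k] Λᵐᵒᵖ) (p : P), r • c • p = c • r • p :=
      fun c r p => (smul_comm c r p).symm
    have smulQ : ∀ (c : k) (r : Γ ⊗[k] Γᵐᵒᵖ) (p : Q), r • c • p = c • r • p :=
      fun c r p => (smul_comm c r p).symm
    have smulPQ : ∀ (c : k) (r : T ⊗[k] Tᵐᵒᵖ) (p : P ⊗[k] Q), r • c • p = c • r • p :=
      fun c r p => (smul_comm c r p).symm
    have oneΛe : (1 ⊗ₜ op 1 : Λ ⊗[k] Λᵐᵒᵖ) = 1 := rfl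
    have oneΓe : (1 ⊗ₜ op 1 : Γ ⊗[k] Γᵐᵒᵖ) = 1 := rfl
    -- the degrees that matter
    let S : Set B := {b | ∃ g ∈ ℬ b, ∃ q : Q, (g ⊗ₜ op 1 : Γ ⊗[k] Γᵐᵒᵖ) • q ≠ 0}
    let S' : Set A := {a | ∃ l' ∈ 𝒜 a, ∃ p : P, (1 ⊗ₜ op l' : Λ ⊗[k] Λᵐᵒᵖ) • p ≠ 0}
    have hS : ∀ b ∈ S, ∃ g ∈ ℬ b, ∃ qy, ∃ q ∈ 𝓠 qy, (g ⊗ₜ op 1 : Γ ⊗[k] Γᵐᵒᵖ) • q ≠ 0 := by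
      rintro b ⟨g, hg, q, hq⟩
      by_contra! hc
      have : Algebra.lsmul k k Q (g ⊗ₜ op 1 : Γ ⊗[k] Γᵐᵒᵖ) = 0 := by
        apply glQ.ext
        intro j m hm
        simpa using hc g hg j m hm
      exact hq (by simpa using LinearMap.congr_fun this q)
    have hS' : ∀ a ∈ S', ∃ l' ∈ 𝒜 a, ∃ px, ∃ p ∈ 𝓟 px,
        (1 ⊗ₜ op l' : Λ ⊗[k] Λᵐᵒᵖ) • p ≠ 0 := by
      rintro b ⟨g, hg, q, hq⟩
      by_contra! hc
      have : Algebra.lsmul k k P (1 ⊗ₜ op g : Λ ⊗[k] Λᵐᵒᵖ) = 0 := by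
        apply glP.ext
        intro j m hm
        simpa using hc g hg j m hm
      exact hq (by simpa using LinearMap.congr_fun this q)
    have hnS : ∀ b, b ∉ S → ∀ g ∈ ℬ b, ∀ (g' : Γ) (q : Q),
        (g ⊗ₜ op g' : Γ ⊗[k] Γᵐᵒᵖ) • q = 0 := by
      intro b hb g hg g' q
      by_contra hc
      refine hb ⟨g, hg, (1 ⊗ₜ op g' : Γ ⊗[k] Γᵐᵒᵖ) • q, ?_⟩
      rwa [smul_smul, Algebra.TensorProduct.tmul_mul_tmul, mul_one, op_one, one_mul]
    have hnS' : ∀ a, a ∉ S' → ∀ l' ∈ 𝒜 a, ∀ (l : Λ) (p : P),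
        (l ⊗ₜ op l' : Λ ⊗[k] Λᵐᵒᵖ) • p = 0 := by
      intro b hb g hg g' q
      by_contra hc
      refine hb ⟨g, hg, (g' ⊗ₜ op 1 : Λ ⊗[k] Λᵐᵒᵖ) • q, ?_⟩
      rwa [smul_smul, Algebra.TensorProduct.tmul_mul_tmul, one_mul, op_one, mul_one]
    have hgrP : ∀ b ∈ S, ∀ D : P →ₗ[k] P, (∀ px, ∀ p ∈ 𝓟 px, D p = (t px b : k) • p) →
        ∀ i i' px, ∀ l ∈ 𝒜 i, ∀ l' ∈ 𝒜 i', ∀ p ∈ 𝓟 px,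
        D ((l ⊗ₜ op l' : Λ ⊗[k] Λᵐᵒᵖ) • p) =
          ((t (i + i') b : k) * (t px b : k)) • ((l ⊗ₜ op l' : Λ ⊗[k] Λᵐᵒᵖ) • p) := by
      intro b hb D hD i i' px l hl l' hl' p hp
      obtain ⟨g, hg, qy, q, hq, hgq⟩ := hS b hb
      have h1 : ∀ m : P, (e (1 ⊗ₜ g) ⊗ₜ op (e (1 ⊗ₜ 1)) : T ⊗[k] Tᵐᵒᵖ) • (m ⊗ₜ[k] q) =
          D m ⊗ₜ ((g ⊗ₜ op 1 : Γ ⊗[k] Γᵐᵒᵖ) • q) := by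
        intro m
        have : (Algebra.lsmul k k (P ⊗[k] Q) (e (1 ⊗ₜ g) ⊗ₜ op (e (1 ⊗ₜ 1)) : T ⊗[k] Tᵐᵒᵖ)) ∘ₗ
            ((TensorProduct.mk k P Q).flip q) =
            ((TensorProduct.mk k P Q).flip ((g ⊗ₜ op 1 : Γ ⊗[k] Γᵐᵒᵖ) • q)) ∘ₗ D := by
          apply glP.ext
          intro j m hm
          simp only [LinearMap.comp_apply, Algebra.lsmul_coe, LinearMap.flip_apply,
            TensorProduct.mk_apply]
          rw [hPQ j 0 qy b 1 1 g 1 m q one𝒜 hg hm hq, hD j m hm, oneΛe, one_smul]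
          simp [t0l, TensorProduct.smul_tmul']
        exact LinearMap.congr_fun this m
      have h2 : (e (1 ⊗ₜ g) ⊗ₜ op (e (1 ⊗ₜ 1)) : T ⊗[k] Tᵐᵒᵖ) •
          (e (l ⊗ₜ 1) ⊗ₜ op (e (l' ⊗ₜ 1)) : T ⊗[k] Tᵐᵒᵖ) • (p ⊗ₜ[k] q) =
          (t i b : k) • (e (l ⊗ₜ g) ⊗ₜ op (e (l' ⊗ₜ 1)) : T ⊗[k] Tᵐᵒᵖ) • (p ⊗ₜ[k] q) := by
        rw [smul_smul, mulR, hemul 1 l g 1 hl hg, he1, mul_one, one_mul, mul_one,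
          ← TensorProduct.smul_tmul', smul_assoc]
      rw [hPQ px i' qy 0 l l' 1 1 p q hl' oneℬ hp hq, hPQ px i' qy b l l' g 1 p q hl' hg hp hq,
        smulPQ, oneΓe, one_smul, h1, smul_smul, t0r, t0r, Units.val_one, one_mul, mul_one] at h2
      have h3 := congrArg (fun z => (t i' qy : k)⁻¹ • z) h2
      simp only [smul_smul] at h3
      rw [inv_mul_cancel₀ (by simp), one_smul, TensorProduct.smul_tmul'] at h3
      rw [tmul_cancel hgq h3]
      congr 1
      rw [ht₁]
      simp only [Units.val_mul]
      have := (t i' qy).ne_zero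
      field_simp
    have hgrQ : ∀ a ∈ S', ∀ D : Q →ₗ[k] Q, (∀ qy, ∀ q ∈ 𝓠 qy, D q = (t a qy : k) • q) →
        ∀ j j' qy, ∀ g ∈ ℬ j, ∀ g' ∈ ℬ j', ∀ q ∈ 𝓠 qy,
        D ((g ⊗ₜ op g' : Γ ⊗[k] Γᵐᵒᵖ) • q) =
          ((t a (j + j') : k) * (t a qy : k)) • ((g ⊗ₜ op g' : Γ ⊗[k] Γᵐᵒᵖ) • q) := by
      intro a ha D hD j j' qy g hg g' hg' q hq
      obtain ⟨l', hl', px, p, hp, hlp⟩ := hS' a ha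
      have h1 : ∀ m : Q, (e (1 ⊗ₜ 1) ⊗ₜ op (e (l' ⊗ₜ 1)) : T ⊗[k] Tᵐᵒᵖ) • (p ⊗ₜ[k] m) =
          ((1 ⊗ₜ op l' : Λ ⊗[k] Λᵐᵒᵖ) • p) ⊗ₜ D m := by
        intro m
        have : (Algebra.lsmul k k (P ⊗[k] Q) (e (1 ⊗ₜ 1) ⊗ₜ op (e (l' ⊗ₜ 1)) : T ⊗[k] Tᵐᵒᵖ)) ∘ₗ
            (TensorProduct.mk k P Q p) =
            (TensorProduct.mk k P Q ((1 ⊗ₜ op l' : Λ ⊗[k] Λᵐᵒᵖ) • p)) ∘ₗ D := by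
          apply glQ.ext
          intro j m hm
          simp only [LinearMap.comp_apply, Algebra.lsmul_coe,
            TensorProduct.mk_apply]
          rw [hPQ px a j 0 1 l' 1 1 p m hl' oneℬ hp hm, hD j m hm, oneΓe, one_smul]
          simp [t0r]
        exact LinearMap.congr_fun this m
      have h2 : (e (1 ⊗ₜ 1) ⊗ₜ op (e (l' ⊗ₜ 1)) : T ⊗[k] Tᵐᵒᵖ) •
          (e (1 ⊗ₜ g) ⊗ₜ op (e (1 ⊗ₜ g')) : T ⊗[k] Tᵐᵒᵖ) • (p ⊗ₜ[k] q) =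
          (t a j' : k) • (e (1 ⊗ₜ g) ⊗ₜ op (e (l' ⊗ₜ g')) : T ⊗[k] Tᵐᵒᵖ) • (p ⊗ₜ[k] q) := by
        rw [smul_smul, mulR, hemul 1 l' g' 1 hl' hg', he1, one_mul, one_mul, mul_one, op_smul,
          TensorProduct.tmul_smul, smul_assoc]
      rw [hPQ px 0 qy j 1 1 g g' p q one𝒜 hg hp hq, hPQ px a qy j 1 l' g g' p q hl' hg hp hq,
        smulPQ, oneΛe, one_smul, h1, smul_smul, t0l, t0l, Units.val_one, mul_one, mul_one] at h2
      have h3 := congrArg (fun z => (t px j : k)⁻¹ • z) h2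
      simp only [smul_smul] at h3
      rw [inv_mul_cancel₀ (by simp), one_smul, ← TensorProduct.tmul_smul] at h3
      rw [tmul_cancel' hlp h3]
      congr 1
      rw [ht₂]
      simp only [Units.val_mul]
      have := (t px j).ne_zero
      field_simp
    obtain ⟨μP, hμP⟩ := exists_act (k := k) (M := P) (Λ ⊗[k] Λᵐᵒᵖ)
    obtain ⟨μQ, hμQ⟩ := exists_act (k := k) (M := Q) (Γ ⊗[k] Γᵐᵒᵖ)
    obtain ⟨μR, hμR⟩ := exists_act (k := k) (M := P ⊗[k] Q) (T ⊗[k] Tᵐᵒᵖ)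
    obtain ⟨σP, hσP, hσPD⟩ := graded_section (S := S) glΛe (fun i s => t (i.1 + i.2) s.1)
      (by
        rintro ⟨i, i'⟩ ⟨j, j'⟩ _ ⟨l, hl, _, ⟨l', hl', rfl⟩, rfl⟩ _ ⟨m, hm, _, ⟨m', hm', rfl⟩, rfl⟩
        refine ⟨(i + j, j' + i'), ⟨l * m, SetLike.GradedMul.mul_mem hl hm, _,
          ⟨m' * l', SetLike.GradedMul.mul_mem hm' hl', rfl⟩, ?_⟩, ?_⟩
        · simp [Algebra.TensorProduct.tmul_mul_tmul]
        · funext s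
          simp only [Pi.mul_apply, ← ht₁]
          congr 1
          abel)
      glP (fun i s => t i s.1)
      (by
        rintro ⟨b, hb⟩ D hD ⟨i, i'⟩ px _ ⟨l, hl, _, ⟨l', hl', rfl⟩, rfl⟩ p hp
        exact hgrP b hb D hD i i' px l hl l' hl' p hp)
      μP hμP
    obtain ⟨σQ, hσQ, hσQD⟩ := graded_section (S := S') glΓe (fun i s => t s.1 (i.1 + i.2))
      (by
        rintro ⟨i, i'⟩ ⟨j, j'⟩ _ ⟨l, hl, _, ⟨l', hl', rfl⟩, rfl⟩ _ ⟨m, hm, _, ⟨m', hm', rfl⟩, rfl⟩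
        refine ⟨(i + j, j' + i'), ⟨l * m, SetLike.GradedMul.mul_mem hl hm, _,
          ⟨m' * l', SetLike.GradedMul.mul_mem hm' hl', rfl⟩, ?_⟩, ?_⟩
        · simp [Algebra.TensorProduct.tmul_mul_tmul]
        · funext s
          simp only [Pi.mul_apply, ← ht₂]
          congr 1
          abel)
      glQ (fun i s => t s.1 i)
      (by
        rintro ⟨b, hb⟩ D hD ⟨i, i'⟩ px _ ⟨l, hl, _, ⟨l', hl', rfl⟩, rfl⟩ p hp
        exact hgrQ b hb D hD i i' px l hl l' hl' p hp)
      μQ hμQ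
    have glFP := glΛe.tensor glP
    have glFQ := glΓe.tensor glQ
    have glF := glFP.tensor glFQ
    have hDP : ∀ b, ∃ D : (Λ ⊗[k] Λᵐᵒᵖ) ⊗[k] P →ₗ[k] (Λ ⊗[k] Λᵐᵒᵖ) ⊗[k] P,
        ∀ i i' px, ∀ l ∈ 𝒜 i, ∀ l' ∈ 𝒜 i', ∀ p ∈ 𝓟 px,
        D ((l ⊗ₜ op l') ⊗ₜ p) = ((t (i + i') b : k) * (t px b : k)) • ((l ⊗ₜ op l') ⊗ₜ p) := by
      intro b
      obtain ⟨D, hD⟩ := glFP.2 ((Λ ⊗[k] Λᵐᵒᵖ) ⊗[k] P)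
        (fun i => ((t (i.1.1 + i.1.2) b : k) * (t i.2 b : k)) • LinearMap.id)
      refine ⟨D, ?_⟩
      intro i i' px l hl l' hl' p hp
      exact hD ((i, i'), px) _ ⟨_, ⟨l, hl, _, ⟨l', hl', rfl⟩, rfl⟩, p, hp, rfl⟩
    have hDQ : ∀ a, ∃ D : (Γ ⊗[k] Γᵐᵒᵖ) ⊗[k] Q →ₗ[k] (Γ ⊗[k] Γᵐᵒᵖ) ⊗[k] Q,
        ∀ i i' px, ∀ l ∈ ℬ i, ∀ l' ∈ ℬ i', ∀ p ∈ 𝓠 px,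
        D ((l ⊗ₜ op l') ⊗ₜ p) = ((t a (i + i') : k) * (t a px : k)) • ((l ⊗ₜ op l') ⊗ₜ p) := by
      intro a
      obtain ⟨D, hD⟩ := glFQ.2 ((Γ ⊗[k] Γᵐᵒᵖ) ⊗[k] Q)
        (fun i => ((t a (i.1.1 + i.1.2) : k) * (t a i.2 : k)) • LinearMap.id)
      refine ⟨D, ?_⟩
      intro i i' px l hl l' hl' p hp
      exact hD ((i, i'), px) _ ⟨_, ⟨l, hl, _, ⟨l', hl', rfl⟩, rfl⟩, p, hp, rfl⟩
    choose DP hDP using hDP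
    choose DQ hDQ using hDQ
    have hDPσ : ∀ b ∈ S, ∀ px, ∀ p ∈ 𝓟 px, DP b (σP p) = (t px b : k) • σP p := by
      intro b hb px p hp
      refine hσPD ⟨b, hb⟩ (DP b) ?_ px p hp
      rintro ⟨i, i'⟩ px _ ⟨l, hl, _, ⟨l', hl', rfl⟩, rfl⟩ p hp
      exact hDP b i i' px l hl l' hl' p hp
    have hDQσ : ∀ a ∈ S', ∀ px, ∀ p ∈ 𝓠 px, DQ a (σQ p) = (t a px : k) • σQ p := by
      intro b hb px p hp
      refine hσQD ⟨b, hb⟩ (DQ b) ?_ px p hp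
      rintro ⟨i, i'⟩ px _ ⟨l, hl, _, ⟨l', hl', rfl⟩, rfl⟩ p hp
      exact hDQ b i i' px l hl l' hl' p hp
    -- semilinearity
    have hDPx : ∀ b i i', ∀ l ∈ 𝒜 i, ∀ l' ∈ 𝒜 i', ∀ X, DP b ((l ⊗ₜ op l' : Λ ⊗[k] Λᵐᵒᵖ) • X) =
        (t (i + i') b : k) • ((l ⊗ₜ op l' : Λ ⊗[k] Λᵐᵒᵖ) • DP b X) := by
      intro b i i' l hl l' hl' X
      have : (DP b) ∘ₗ (Algebra.lsmul k k ((Λ ⊗[k] Λᵐᵒᵖ) ⊗[k] P) (l ⊗ₜ op l' : Λ ⊗[k] Λᵐᵒᵖ)) =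
          (t (i + i') b : k) • ((Algebra.lsmul k k ((Λ ⊗[k] Λᵐᵒᵖ) ⊗[k] P)
            (l ⊗ₜ op l' : Λ ⊗[k] Λᵐᵒᵖ)) ∘ₗ DP b) := by
        apply glFP.ext
        rintro ⟨⟨j, j'⟩, px⟩ _ ⟨_, ⟨m, hm, _, ⟨m', hm', rfl⟩, rfl⟩, p, hp, rfl⟩
        simp only [LinearMap.comp_apply, LinearMap.smul_apply, Algebra.lsmul_coe,
          coe_opLinearEquiv]
        rw [hDP b j j' px m hm m' hm' p hp, smul_comm (l ⊗ₜ op l' : Λ ⊗[k] Λᵐᵒᵖ) (_ : k),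
          TensorProduct.smul_tmul' (l ⊗ₜ op l' : Λ ⊗[k] Λᵐᵒᵖ),
          smul_eq_mul, Algebra.TensorProduct.tmul_mul_tmul, ← op_mul,
          hDP b (i + j) (j' + i') px _ (SetLike.GradedMul.mul_mem hl hm) _
          (SetLike.GradedMul.mul_mem hm' hl') p hp, smul_smul]
        congr 1
        simp only [ht₁, Units.val_mul]
        ring
      exact LinearMap.congr_fun this X
    have hDQx : ∀ a i i', ∀ l ∈ ℬ i, ∀ l' ∈ ℬ i', ∀ X, DQ a ((l ⊗ₜ op l' : Γ ⊗[k] Γᵐᵒᵖ) • X) =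
        (t a (i + i') : k) • ((l ⊗ₜ op l' : Γ ⊗[k] Γᵐᵒᵖ) • DQ a X) := by
      intro a i i' l hl l' hl' X
      have : (DQ a) ∘ₗ (Algebra.lsmul k k ((Γ ⊗[k] Γᵐᵒᵖ) ⊗[k] Q) (l ⊗ₜ op l' : Γ ⊗[k] Γᵐᵒᵖ)) =
          (t a (i + i') : k) • ((Algebra.lsmul k k ((Γ ⊗[k] Γᵐᵒᵖ) ⊗[k] Q)
            (l ⊗ₜ op l' : Γ ⊗[k] Γᵐᵒᵖ)) ∘ₗ DQ a) := by
        apply glFQ.ext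
        rintro ⟨⟨j, j'⟩, px⟩ _ ⟨_, ⟨m, hm, _, ⟨m', hm', rfl⟩, rfl⟩, p, hp, rfl⟩
        simp only [LinearMap.comp_apply, LinearMap.smul_apply, Algebra.lsmul_coe,
          coe_opLinearEquiv]
        rw [hDQ a j j' px m hm m' hm' p hp, smul_comm (l ⊗ₜ op l' : Γ ⊗[k] Γᵐᵒᵖ) (_ : k),
          TensorProduct.smul_tmul' (l ⊗ₜ op l' : Γ ⊗[k] Γᵐᵒᵖ),
          smul_eq_mul, Algebra.TensorProduct.tmul_mul_tmul, ← op_mul,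
          hDQ a (i + j) (j' + i') px _ (SetLike.GradedMul.mul_mem hl hm) _
          (SetLike.GradedMul.mul_mem hm' hl') p hp, smul_smul]
        congr 1
        simp only [ht₂, Units.val_mul]
        ring
      exact LinearMap.congr_fun this X
    -- the comparison map
    let Φ0 : (((Λ ⊗[k] Λᵐᵒᵖ) ⊗[k] P) ⊗[k] ((Γ ⊗[k] Γᵐᵒᵖ) ⊗[k] Q)) →ₗ[k]
        (T ⊗[k] Tᵐᵒᵖ) ⊗[k] (P ⊗[k] Q) :=
      (TensorProduct.map Θ LinearMap.id) ∘ₗ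
      (TensorProduct.tensorTensorTensorComm k (Λ ⊗[k] Λᵐᵒᵖ) P (Γ ⊗[k] Γᵐᵒᵖ) Q).toLinearMap
    have hΦ0 : ∀ x x' p y y' q, Φ0 (((x ⊗ₜ op x') ⊗ₜ p) ⊗ₜ ((y ⊗ₜ op y') ⊗ₜ q)) =
        (e (x ⊗ₜ y) ⊗ₜ op (e (x' ⊗ₜ y'))) ⊗ₜ (p ⊗ₜ q) := by
      intro x x' p y y' q
      simp [Φ0, hΘ]
    obtain ⟨Φ, hΦ⟩ := glF.2 ((T ⊗[k] Tᵐᵒᵖ) ⊗[k] (P ⊗[k] Q))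
      (fun i => ((t i.1.1.2 i.2.1.1 : k) * (t i.1.2 i.2.1.1 : k) * (t i.1.1.2 i.2.2 : k))⁻¹ • Φ0)
    replace hΦ : ∀ i i' px j j' qy, ∀ x ∈ 𝒜 i, ∀ x' ∈ 𝒜 i', ∀ p ∈ 𝓟 px, ∀ y ∈ ℬ j, ∀ y' ∈ ℬ j',
        ∀ q ∈ 𝓠 qy, Φ (((x ⊗ₜ op x') ⊗ₜ p) ⊗ₜ ((y ⊗ₜ op y') ⊗ₜ q)) =
        ((t i' j : k) * (t px j : k) * (t i' qy : k))⁻¹ •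
          ((e (x ⊗ₜ y) ⊗ₜ op (e (x' ⊗ₜ y'))) ⊗ₜ (p ⊗ₜ q)) := by
      intro i i' px j j' qy x hx x' hx' p hp y hy y' hy' q hq
      refine (hΦ (((i, i'), px), ((j, j'), qy)) _ ⟨_, ⟨_, ⟨x, hx, _, ⟨x', hx', rfl⟩, rfl⟩,
        p, hp, rfl⟩, _, ⟨_, ⟨y, hy, _, ⟨y', hy', rfl⟩, rfl⟩, q, hq, rfl⟩, rfl⟩).trans ?_
      simp only [coe_opLinearEquiv, LinearMap.smul_apply, hΦ0]
    have hμΦ : ∀ Z, μR (Φ Z) = TensorProduct.map (μP.restrictScalars k) (μQ.restrictScalars k) Z := by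
      intro Z
      have : (μR.restrictScalars k) ∘ₗ Φ =
          TensorProduct.map (μP.restrictScalars k) (μQ.restrictScalars k) := by
        refine TensorProduct.ext ?_
        apply glFP.ext
        rintro ⟨⟨i, i'⟩, px⟩ _ ⟨_, ⟨x, hx, _, ⟨x', hx', rfl⟩, rfl⟩, p, hp, rfl⟩
        apply glFQ.ext
        rintro ⟨⟨j, j'⟩, qy⟩ _ ⟨_, ⟨y, hy, _, ⟨y', hy', rfl⟩, rfl⟩, q, hq, rfl⟩
        simp only [LinearMap.compr₂ₛₗ_apply, TensorProduct.mk_apply, LinearMap.comp_apply, coe_opLinearEquiv, TensorProduct.map_tmul,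
          LinearMap.restrictScalars_apply]
        rw [hΦ i i' px j j' qy x hx x' hx' p hp y hy y' hy' q hq]
        rw [← LinearMap.restrictScalars_apply k μR, map_smul, LinearMap.restrictScalars_apply,
          hμR, hμP, hμQ, hPQ px i' qy j x x' y y' p q hx' hy hp hq, smul_smul]
        rw [show ((t i' j : k) * (t px j : k) * (t i' qy : k))⁻¹ *
          ((t px j : k) * (t i' qy : k) * (t i' j : k)) = 1 by field_simp, one_smul]
      exact LinearMap.congr_fun this Z
    have hkey : ∀ i al bg j, ∀ l ∈ 𝒜 i, ∀ l' ∈ 𝒜 al, ∀ g ∈ ℬ bg, ∀ g' ∈ ℬ j, ∀ X Y,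
        (e (l ⊗ₜ g) ⊗ₜ op (e (l' ⊗ₜ g')) : T ⊗[k] Tᵐᵒᵖ) • Φ (X ⊗ₜ Y) =
        (t al bg : k) • Φ (((l ⊗ₜ op l' : Λ ⊗[k] Λᵐᵒᵖ) • DP bg X) ⊗ₜ
          ((g ⊗ₜ op g' : Γ ⊗[k] Γᵐᵒᵖ) • DQ al Y)) := by
      intro i al bg j l hl l' hl' g hg g' hg' X Y
      have : (Algebra.lsmul k k ((T ⊗[k] Tᵐᵒᵖ) ⊗[k] (P ⊗[k] Q))
          (e (l ⊗ₜ g) ⊗ₜ op (e (l' ⊗ₜ g')) : T ⊗[k] Tᵐᵒᵖ)) ∘ₗ Φ =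
          (t al bg : k) • (Φ ∘ₗ TensorProduct.map
            ((Algebra.lsmul k k ((Λ ⊗[k] Λᵐᵒᵖ) ⊗[k] P) (l ⊗ₜ op l' : Λ ⊗[k] Λᵐᵒᵖ)) ∘ₗ DP bg)
            ((Algebra.lsmul k k ((Γ ⊗[k] Γᵐᵒᵖ) ⊗[k] Q) (g ⊗ₜ op g' : Γ ⊗[k] Γᵐᵒᵖ)) ∘ₗ DQ al)) := by
        refine TensorProduct.ext ?_
        apply glFP.ext
        rintro ⟨⟨i1, i2⟩, px⟩ _ ⟨_, ⟨x, hx, _, ⟨x', hx', rfl⟩, rfl⟩, p, hp, rfl⟩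
        apply glFQ.ext
        rintro ⟨⟨j1, j2⟩, qy⟩ _ ⟨_, ⟨y, hy, _, ⟨y', hy', rfl⟩, rfl⟩, q, hq, rfl⟩
        simp only [LinearMap.compr₂ₛₗ_apply, TensorProduct.mk_apply, LinearMap.comp_apply, coe_opLinearEquiv, TensorProduct.map_tmul,
          LinearMap.smul_apply, Algebra.lsmul_coe]
        rw [hΦ i1 i2 px j1 j2 qy x hx x' hx' p hp y hy y' hy' q hq,
          hDP bg i1 i2 px x hx x' hx' p hp, hDQ al j1 j2 qy y hy y' hy' q hq,
          smul_comm (l ⊗ₜ op l' : Λ ⊗[k] Λᵐᵒᵖ) (_ : k),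
          smul_comm (g ⊗ₜ op g' : Γ ⊗[k] Γᵐᵒᵖ) (_ : k),
          smul_comm (e (l ⊗ₜ g) ⊗ₜ op (e (l' ⊗ₜ g')) : T ⊗[k] Tᵐᵒᵖ) (_ : k),
          TensorProduct.smul_tmul' (l ⊗ₜ op l' : Λ ⊗[k] Λᵐᵒᵖ),
          TensorProduct.smul_tmul' (g ⊗ₜ op g' : Γ ⊗[k] Γᵐᵒᵖ),
          TensorProduct.smul_tmul' (e (l ⊗ₜ g) ⊗ₜ op (e (l' ⊗ₜ g')) : T ⊗[k] Tᵐᵒᵖ),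
          smul_eq_mul, smul_eq_mul, smul_eq_mul, mulR,
          Algebra.TensorProduct.tmul_mul_tmul, Algebra.TensorProduct.tmul_mul_tmul,
          ← op_mul, ← op_mul, hemul l x g y hx hg, hemul x' l' y' g' hl' hy', op_smul,
          ← TensorProduct.smul_tmul', TensorProduct.tmul_smul, ← TensorProduct.smul_tmul',
          ← TensorProduct.smul_tmul', TensorProduct.tmul_smul, map_smul,
          ← TensorProduct.smul_tmul', map_smul,
          hΦ (i + i1) (i2 + al) px (bg + j1) (j2 + j) qy _ (SetLike.GradedMul.mul_mem hl hx) _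
            (SetLike.GradedMul.mul_mem hx' hl') p hp _ (SetLike.GradedMul.mul_mem hg hy) _
            (SetLike.GradedMul.mul_mem hy' hg') q hq]
        simp only [smul_smul, ht₁, ht₂, Units.val_mul, ← TensorProduct.smul_tmul']
        congr 1
        field_simp
      exact LinearMap.congr_fun this (X ⊗ₜ Y)
    let σ : P ⊗[k] Q →ₗ[k] (T ⊗[k] Tᵐᵒᵖ) ⊗[k] (P ⊗[k] Q) :=
      Φ ∘ₗ TensorProduct.map (σP.restrictScalars k) (σQ.restrictScalars k)
    have hσ1 : ∀ p q, σ (p ⊗ₜ q) = Φ (σP p ⊗ₜ σQ q) := fun p q => rfl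
    have hlin0 : ∀ i al bg j, ∀ l ∈ 𝒜 i, ∀ l' ∈ 𝒜 al, ∀ g ∈ ℬ bg, ∀ g' ∈ ℬ j, ∀ Z,
        σ ((e (l ⊗ₜ g) ⊗ₜ op (e (l' ⊗ₜ g')) : T ⊗[k] Tᵐᵒᵖ) • Z) =
        (e (l ⊗ₜ g) ⊗ₜ op (e (l' ⊗ₜ g')) : T ⊗[k] Tᵐᵒᵖ) • σ Z := by
      intro i al bg j l hl l' hl' g hg g' hg' Z
      have : σ ∘ₗ (Algebra.lsmul k k (P ⊗[k] Q)
            (e (l ⊗ₜ g) ⊗ₜ op (e (l' ⊗ₜ g')) : T ⊗[k] Tᵐᵒᵖ)) =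
          (Algebra.lsmul k k ((T ⊗[k] Tᵐᵒᵖ) ⊗[k] (P ⊗[k] Q))
            (e (l ⊗ₜ g) ⊗ₜ op (e (l' ⊗ₜ g')) : T ⊗[k] Tᵐᵒᵖ)) ∘ₗ σ := by
        apply (glP.tensor glQ).ext
        rintro ⟨px, qy⟩ _ ⟨p, hp, q, hq, rfl⟩
        simp only [LinearMap.comp_apply, Algebra.lsmul_coe]
        rw [hPQ px al qy bg l l' g g' p q hl' hg hp hq, map_smul, hσ1, hσ1,
          hkey i al bg j l hl l' hl' g hg g' hg', map_smul, map_smul]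
        by_cases hb : bg ∈ S
        · by_cases ha : al ∈ S'
          · rw [hDPσ bg hb px p hp, hDQσ al ha qy q hq,
              smul_comm (l ⊗ₜ op l' : Λ ⊗[k] Λᵐᵒᵖ) (_ : k),
              smul_comm (g ⊗ₜ op g' : Γ ⊗[k] Γᵐᵒᵖ) (_ : k),
              ← TensorProduct.smul_tmul', TensorProduct.tmul_smul, map_smul, map_smul]
            simp only [smul_smul]
            congr 1
            ring
          · have h0 : (l ⊗ₜ op l' : Λ ⊗[k] Λᵐᵒᵖ) • σP p = 0 := by
              rw [← map_smul, hnS' al ha l' hl' l p, map_zero]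
            have h1 := hDPx bg i al l hl l' hl' (σP p)
            rw [h0, map_zero] at h1
            have h2 := (smul_eq_zero.1 h1.symm).resolve_left (Units.ne_zero _)
            rw [h0, h2]
            simp
        · have h0 : (g ⊗ₜ op g' : Γ ⊗[k] Γᵐᵒᵖ) • σQ q = 0 := by
            rw [← map_smul, hnS bg hb g hg g' q, map_zero]
          have h1 := hDQx al bg j g hg g' hg' (σQ q)
          rw [h0, map_zero] at h1
          have h2 := (smul_eq_zero.1 h1.symm).resolve_left (Units.ne_zero _)
          rw [h0, h2]
          simp
      exact LinearMap.congr_fun this Z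
    have hlin : ∀ (r : T ⊗[k] Tᵐᵒᵖ) Z, σ (r • Z) = r • σ Z := by
      intro r Z
      have h2 : σ ∘ₗ (LinearMap.toSpanSingleton (T ⊗[k] Tᵐᵒᵖ) (P ⊗[k] Q) Z).restrictScalars k
          = (LinearMap.toSpanSingleton (T ⊗[k] Tᵐᵒᵖ) ((T ⊗[k] Tᵐᵒᵖ) ⊗[k] (P ⊗[k] Q))
            (σ Z)).restrictScalars k := by
        apply glR.ext
        rintro ⟨⟨i, bg⟩, ⟨al, j⟩⟩ _ ⟨_, ⟨_, ⟨l, hl, g, hg, rfl⟩, rfl⟩, _,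
          ⟨_, ⟨_, ⟨l', hl', g', hg', rfl⟩, rfl⟩, rfl⟩, rfl⟩
        exact hlin0 i al bg j l hl l' hl' g hg g' hg' Z
      exact LinearMap.congr_fun h2 r
    refine Module.Projective.of_split
      ({ toFun := σ, map_add' := σ.map_add, map_smul' := hlin } :
        P ⊗[k] Q →ₗ[T ⊗[k] Tᵐᵒᵖ] (T ⊗[k] Tᵐᵒᵖ) ⊗[k] (P ⊗[k] Q)) μR ?_
    have hid : (μR.restrictScalars k) ∘ₗ σ = LinearMap.id := by
      apply TensorProduct.ext'
      intro p q
      simp only [LinearMap.comp_apply, LinearMap.restrictScalars_apply, LinearMap.id_apply]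
      rw [hσ1, hμΦ, TensorProduct.map_tmul, LinearMap.restrictScalars_apply,
        LinearMap.restrictScalars_apply, hσP, hσQ]
    ext1 z
    exact LinearMap.congr_fun hid z
end

section
/- Let Λ be a finite dimensional k-algebra and H a commutative Noetherian ring of cohomology operators for Λ. Then Ext^*_Λ(M, M') is finitely generated over H for all finitely generated Λ-modules M, M' if and only if Ext^*_Λ(Λ/Rad Λ, Λ/Rad Λ) is finitely generated over H. -/
noncomputable section

open CategoryTheory Abelian

variable (k : Type) [Field k] (Λ : Type) [Ring Λ] [Algebra k Λ]
variable [HasExt.{1} (ModuleCat.{0} Λ)]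
variable (H : Type) [CommRing H] [Algebra k H] (ℋ : ℕ → Submodule k H)
variable (φ : ∀ (M : ModuleCat.{0} Λ) (i : ℕ), ℋ i →+ Ext M M i)

/-- `Ext^*_Λ(M, M')` is a finitely generated `H`-module: finitely many homogeneous
elements generate it under the `H`-action (given by `h · x = φ_M(h) ∘ x`) together with
addition and subtraction. -/
def ExtFGOver (M M' : ModuleCat.{0} Λ) : Prop :=
  ∃ (d : ℕ) (g : Fin d → Σ m : ℕ, Ext M M' m),
    ∀ (n : ℕ) (x : Ext M M' n), x ∈ AddSubgroup.closure
      {y : Ext M M' n | ∃ (jj : Fin d) (i : ℕ) (h : ℋ i) (heq : i + (g jj).1 = n),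
        y = ((φ M i h).comp (g jj).2 heq)}


namespace CohAux

set_option linter.unusedSectionVars false

open DirectSum

/-- The hypotheses on the operators, bundled. -/
class IsOps [GradedAlgebra ℋ] : Prop where
  one : ∀ (M : ModuleCat.{0} Λ) (h1 : (1 : H) ∈ ℋ 0), φ M 0 ⟨1, h1⟩ = Ext.mk₀ (𝟙 M)
  mul : ∀ (M : ModuleCat.{0} Λ) (i j : ℕ) (x y : H) (hx : x ∈ ℋ i) (hy : y ∈ ℋ j)
      (hxy : x * y ∈ ℋ (i + j)),
      φ M (i + j) ⟨x * y, hxy⟩ = (φ M i ⟨x, hx⟩).comp (φ M j ⟨y, hy⟩) rfl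
  comm : ∀ (M M' : ModuleCat.{0} Λ) (n i : ℕ) (h : ℋ i) (x : Ext M M' n),
      x.comp (φ M' i h) rfl = (φ M i h).comp x (Nat.add_comm i n)

theorem finite_mid_gen {R : Type*} [Ring R] (_ : IsNoetherianRing R) {A B C : Type*}
    [AddCommGroup A] [AddCommGroup B] [AddCommGroup C] [Module R A] [Module R B] [Module R C]
    (f : A →ₗ[R] B) (g : B →ₗ[R] C) (hfg : LinearMap.ker g ≤ LinearMap.range f)
    (_ : Module.Finite R A) (_ : Module.Finite R C) : Module.Finite R B := by
  have h1 : (LinearMap.ker g).FG := by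
    have := isNoetherian_of_le hfg
    exact Module.Finite.iff_fg.1 inferInstance
  have h2 : (Submodule.map g ⊤).FG := IsNoetherian.noetherian _
  exact ⟨Submodule.fg_of_fg_map_of_fg_inf_ker g h2 (by simpa using h1)⟩

theorem finite_mid_gen' {R : Type*} [sR : Semiring R] (rR : Ring R) (hR : sR = rR.toSemiring)
    (hN : IsNoetherianRing R) {A B C : Type*}
    [sA : AddCommMonoid A] [sB : AddCommMonoid B] [sC : AddCommMonoid C]
    (gA : AddCommGroup A) (hA : sA = gA.toAddCommMonoid)
    (gB : AddCommGroup B) (hB : sB = gB.toAddCommMonoid)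
    (gC : AddCommGroup C) (hC : sC = gC.toAddCommMonoid)
    [Module R A] [Module R B] [Module R C]
    (f : A →ₗ[R] B) (g : B →ₗ[R] C) (hfg : LinearMap.ker g ≤ LinearMap.range f)
    (h1 : Module.Finite R A) (h2 : Module.Finite R C) : Module.Finite R B := by
  subst hR hA hB hC
  exact finite_mid_gen hN f g hfg h1 h2

theorem neg_mem_gen {R : Type*} [sR : Semiring R] (rR : Ring R) (hR : sR = rR.toSemiring)
    {A : Type*} [sA : AddCommMonoid A] (gA : AddCommGroup A) (hA : sA = gA.toAddCommMonoid)
    [Module R A] (p : Submodule R A) (x : A) (hx : x ∈ p) : -x ∈ p := by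
  subst hR hA
  exact neg_mem hx

variable {k Λ H ℋ}

/-- Synonym of `Ext` remembering the operators. -/
def EE (_φ : ∀ (M : ModuleCat.{0} Λ) (i : ℕ), ℋ i →+ Ext M M i)
    (M M' : ModuleCat.{0} Λ) (n : ℕ) : Type 1 := Ext M M' n

instance (M M' : ModuleCat.{0} Λ) (n : ℕ) : AddCommGroup (EE φ M M' n) :=
  inferInstanceAs (AddCommGroup (Ext M M' n))

theorem gm_ext {M M' : ModuleCat.{0} Λ} {n m : ℕ} (h : n = m) (x : Ext M M' n) (y : Ext M M' m)
    (hxy : h ▸ x = y) : (GradedMonoid.mk n x : GradedMonoid (EE φ M M')) = GradedMonoid.mk m y := by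
  subst h; subst hxy; rfl

theorem cast_comp {M M' M'' : ModuleCat.{0} Λ} {a b n m : ℕ} (h : n = m) (x : Ext M M' a)
    (y : Ext M' M'' b) (hn : a + b = n) :
    (h ▸ (x.comp y hn) : Ext M M'' m) = x.comp y (hn.trans h) := by
  subst h; rfl

variable [GradedAlgebra ℋ] [IsOps k Λ H ℋ φ]

instance (M M' : ModuleCat.{0} Λ) : DirectSum.Gmodule (fun i => ℋ i) (EE φ M M') where
  smul {i j} h x := Ext.comp (φ M i h) (x : Ext M M' j) rfl
  one_smul := by
    rintro ⟨n, x⟩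
    refine gm_ext φ (zero_add n) _ _ ((cast_comp (zero_add n) _ _ _).trans ?_)
    refine (congrArg (fun z => Ext.comp z (x : Ext M M' n) (zero_add n))
      (IsOps.one (φ := φ) M (SetLike.one_mem_graded ℋ))).trans ?_
    exact Ext.mk₀_id_comp x
  mul_smul := by
    rintro ⟨i, a, ha⟩ ⟨j, b, hb⟩ ⟨n, x⟩
    refine gm_ext φ (add_assoc i j n) _ _ ((cast_comp (add_assoc i j n) _ _ _).trans ?_)
    refine (congrArg (fun z => Ext.comp z (x : Ext M M' n) (add_assoc i j n))
      (IsOps.mul (φ := φ) M i j a b ha hb (SetLike.mul_mem_graded ha hb))).trans ?_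
    exact Ext.comp_assoc (φ M i ⟨a, ha⟩) (φ M j ⟨b, hb⟩) (x : Ext M M' n) rfl rfl
      (add_assoc i j n)
  smul_add a b c := Ext.comp_add _ _ _ _
  smul_zero a := Ext.comp_zero _ _ _ _ _
  add_smul a a' b := by
    change Ext.comp (φ M _ (a + a')) _ _ = Ext.comp _ _ _ + Ext.comp _ _ _
    rw [map_add]; exact Ext.add_comp _ _ _ _
  zero_smul b := by
    change Ext.comp (φ M _ 0) _ _ = 0
    rw [map_zero]; exact Ext.zero_comp _ _ _ _ _

/-- Total Ext. -/
abbrev TE (M M' : ModuleCat.{0} Λ) : Type 1 := ⨁ n, EE φ M M' n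

theorem of_smul (M M' : ModuleCat.{0} Λ) (i j n : ℕ) (hn : i + j = n) (h : ℋ i)
    (x : Ext M M' j) :
    (DirectSum.of (fun i => ℋ i) i h) • (DirectSum.of (EE φ M M') j x) =
      DirectSum.of (EE φ M M') n (Ext.comp (φ M i h) x hn) := by
  subst hn
  exact DirectSum.Gmodule.of_smul_of _ _ _ _

theorem TE_neg_mem {M M' : ModuleCat.{0} Λ} (p : Submodule (⨁ i, ℋ i) (TE φ M M'))
    (x : TE φ M M') (hx : x ∈ p) : -x ∈ p := by
  refine neg_mem_gen (inferInstanceAs (Ring (⨁ i, ℋ i))) ?_ _ ?_ _ _ hx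
  · rfl
  · rfl

theorem noeth [IsNoetherianRing H] : IsNoetherianRing (⨁ i, ℋ i) :=
    isNoetherianRing_of_ringEquiv H (DirectSum.decomposeRingEquiv ℋ)

theorem finite_mid (hN : IsNoetherianRing (⨁ i, ℋ i)) {A A' B B' C C' : ModuleCat.{0} Λ}
    (f : TE φ A A' →ₗ[⨁ i, ℋ i] TE φ B B') (g : TE φ B B' →ₗ[⨁ i, ℋ i] TE φ C C')
    (hfg : LinearMap.ker g ≤ LinearMap.range f)
    (h1 : Module.Finite (⨁ i, ℋ i) (TE φ A A')) (h2 : Module.Finite (⨁ i, ℋ i) (TE φ C C')) :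
    Module.Finite (⨁ i, ℋ i) (TE φ B B') := by
  refine finite_mid_gen' (inferInstanceAs (Ring (⨁ i, ℋ i))) ?_ hN
    (inferInstanceAs (AddCommGroup (TE φ A A'))) ?_
    (inferInstanceAs (AddCommGroup (TE φ B B'))) ?_
    (inferInstanceAs (AddCommGroup (TE φ C C'))) ?_ f g ?_ h1 h2
  · rfl
  · rfl
  · rfl
  · rfl
  · exact hfg

theorem finite_of_fg {M M' : ModuleCat.{0} Λ} (hfg : ExtFGOver k Λ H ℋ φ M M') :
    Module.Finite (⨁ i, ℋ i) (TE φ M M') := by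
  obtain ⟨d, g, hg⟩ := hfg
  let v : Fin d → TE φ M M' := fun j => DirectSum.of (EE φ M M') (g j).1 (g j).2
  refine ⟨⟨(Set.finite_range v).toFinset, ?_⟩⟩
  rw [Set.Finite.coe_toFinset, eq_top_iff]
  rintro x -
  induction x using DirectSum.induction_on with
  | zero => exact zero_mem _
  | add x y hx hy => exact add_mem hx hy
  | of n x =>
    refine AddSubgroup.closure_induction
      (p := fun (y : Ext M M' n) _ => DirectSum.of (EE φ M M') n y ∈
        Submodule.span (⨁ i, ℋ i) (Set.range v)) ?_ ?_ ?_ ?_ (hg n x)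
    · rintro y ⟨j, i, h, heq, rfl⟩
      rw [← of_smul]
      exact Submodule.smul_mem _ _ (Submodule.subset_span ⟨j, rfl⟩)
    · exact (map_zero (DirectSum.of (EE φ M M') n)) ▸ zero_mem _
    · intro a b _ _ ha hb
      exact (map_add (DirectSum.of (EE φ M M') n) a b) ▸ add_mem ha hb
    · intro a _ ha
      exact (map_neg (DirectSum.of (EE φ M M') n) a) ▸ TE_neg_mem φ _ _ ha

theorem fg_of_finite {M M' : ModuleCat.{0} Λ} [hf : Module.Finite (⨁ i, ℋ i) (TE φ M M')] :
    ExtFGOver k Λ H ℋ φ M M' := by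
  classical
  obtain ⟨s, hs⟩ := hf
  let T : Finset (Σ n : ℕ, Ext M M' n) :=
    s.biUnion fun x => (DFinsupp.support x).image fun n => ⟨n, (x n : EE φ M M' n)⟩
  refine ⟨T.card, fun j => (T.equivFin.symm j).1, ?_⟩
  set g : Fin T.card → Σ n : ℕ, Ext M M' n := fun j => (T.equivFin.symm j).1
  let C : ∀ n, AddSubgroup (Ext M M' n) := fun n => AddSubgroup.closure
      {y : Ext M M' n | ∃ (jj : Fin T.card) (i : ℕ) (h : ℋ i) (heq : i + (g jj).1 = n),
        y = ((φ M i h).comp (g jj).2 heq)}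
  have hC : ∀ (i m n : ℕ) (hn : i + m = n) (h : ℋ i) (y : Ext M M' m), y ∈ C m →
      (φ M i h).comp y hn ∈ C n := by
    intro i m n hn h y hy
    refine AddSubgroup.closure_induction
      (p := fun (y : Ext M M' m) _ => (φ M i h).comp y hn ∈ C n) ?_ ?_ ?_ ?_ hy
    · rintro y ⟨j, i', h', heq, rfl⟩
      refine AddSubgroup.subset_closure ⟨j, i + i', ⟨h.1 * h'.1, SetLike.mul_mem_graded h.2 h'.2⟩,
        by omega, ?_⟩
      rw [IsOps.mul (φ := φ) M i i' h.1 h'.1 h.2 h'.2]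
      exact (Ext.comp_assoc _ _ _ _ _ (by omega)).symm
    · rw [Ext.comp_zero]; exact zero_mem _
    · intro a b _ _ ha hb
      rw [Ext.comp_add]; exact add_mem ha hb
    · intro a _ ha
      rw [Ext.comp_neg]; exact neg_mem ha
  let P : AddSubgroup (TE φ M M') :=
    { carrier := {x | ∀ n, (x n : EE φ M M' n) ∈ C n}
      zero_mem' := fun n => zero_mem (C n)
      add_mem' := fun {a b} ha hb n => add_mem (ha n) (hb n)
      neg_mem' := fun {a} ha n => neg_mem (ha n) }
  have hPof : ∀ n (y : Ext M M' n), y ∈ C n → DirectSum.of (EE φ M M') n y ∈ P := by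
    intro n y hy m
    by_cases h : n = m
    · subst h
      have e := DirectSum.of_eq_same (β := EE φ M M') n y
      exact e.symm ▸ hy
    · have e := DirectSum.of_eq_of_ne (β := EE φ M M') n m y (Ne.symm h)
      exact e.symm ▸ zero_mem (C m)
  let Q : Submodule (⨁ i, ℋ i) (TE φ M M') :=
    { P with
      smul_mem' := by
        intro r x hx
        change r • x ∈ P
        induction r using DirectSum.induction_on with
        | zero => rw [zero_smul]; exact zero_mem _
        | add a b ha hb => rw [add_smul]; exact add_mem ha hb
        | of i h =>
          rw [← DirectSum.sum_support_of x, Finset.smul_sum]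
          refine sum_mem fun m _ => ?_
          erw [of_smul φ M M' i m _ rfl h]
          exact hPof _ _ (hC _ _ _ _ _ _ (hx m)) }
  have hQ : Q = ⊤ := by
    rw [eq_top_iff, ← hs, Submodule.span_le]
    intro x hx n
    by_cases hn : x n = 0
    · rw [hn]; exact zero_mem (C n)
    · have hT : (⟨n, x n⟩ : Σ n : ℕ, Ext M M' n) ∈ T :=
        Finset.mem_biUnion.2 ⟨x, hx, Finset.mem_image.2 ⟨n, DFinsupp.mem_support_iff.2 hn, rfl⟩⟩
      have hj : g (T.equivFin ⟨_, hT⟩) = ⟨n, x n⟩ := by simp [g]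
      have h1 : (1 : H) ∈ ℋ 0 := SetLike.one_mem_graded ℋ
      refine AddSubgroup.subset_closure ⟨T.equivFin ⟨_, hT⟩, 0, ⟨1, h1⟩, by rw [hj]; simp, ?_⟩
      rw [IsOps.one (φ := φ) M h1]
      have : ∀ (z : Σ n : ℕ, Ext M M' n) (hz : z = ⟨n, x n⟩) (e : 0 + z.1 = n),
          (x n : Ext M M' n) = (Ext.mk₀ (𝟙 M)).comp z.2 e := by
        rintro z rfl e
        exact (Ext.mk₀_id_comp _).symm
      exact this _ hj _
  intro n x
  have hx : DirectSum.of (EE φ M M') n x ∈ Q := hQ ▸ Submodule.mem_top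
  have h2 := hx n
  have e := DirectSum.of_eq_same (β := EE φ M M') n x
  exact e ▸ h2

/-- Build a linear map of total Ext from a degreewise map. -/
def lin {A B A' B' : ModuleCat.{0} Λ} (f : ∀ n, Ext A B n →+ Ext A' B' n)
    (hf : ∀ (i n : ℕ) (h : ℋ i) (x : Ext A B n),
      f (i + n) ((φ A i h).comp x rfl) = (φ A' i h).comp (f n x) rfl) :
    TE φ A B →ₗ[⨁ i, ℋ i] TE φ A' B' where
  toFun := DirectSum.map (α := EE φ A B) (β := EE φ A' B') f
  map_add' := map_add _
  map_smul' r x := by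
    induction r using DirectSum.induction_on with
    | zero => simp only [zero_smul, map_zero]
    | add a b ha hb => simp only [add_smul, map_add, ha, hb]
    | of i h =>
      induction x using DirectSum.induction_on with
      | zero => simp only [smul_zero, map_zero]
      | add a b ha hb => simp only [smul_add, map_add, ha, hb]
      | of n x =>
        refine (congrArg _ (of_smul φ A B i n _ rfl h x)).trans ?_
        refine (DirectSum.map_of (α := EE φ A B) (β := EE φ A' B') f _ _).trans ?_
        refine (congrArg (DirectSum.of (EE φ A' B') (i + n)) (hf i n h x)).trans ?_
        refine (of_smul φ A' B' i n _ rfl h (f n x)).symm.trans ?_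
        exact congrArg _ (DirectSum.map_of (α := EE φ A B) (β := EE φ A' B') f _ _).symm

theorem lin_of {A B A' B' : ModuleCat.{0} Λ} (f : ∀ n, Ext A B n →+ Ext A' B' n)
    (hf) (n : ℕ) (x : Ext A B n) :
    lin φ f hf (DirectSum.of (EE φ A B) n x) = DirectSum.of (EE φ A' B') n (f n x) :=
  DirectSum.map_of _ _ _

theorem lin_apply {A B A' B' : ModuleCat.{0} Λ} (f : ∀ n, Ext A B n →+ Ext A' B' n)
    (hf) (n : ℕ) (x : TE φ A B) :
    (lin φ f hf x) n = f n (x n) :=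
  DirectSum.map_apply _ _ _

/-- Postcomposition. -/
def post (X : ModuleCat.{0} Λ) {A B : ModuleCat.{0} Λ} (f : A ⟶ B) :
    TE φ X A →ₗ[⨁ i, ℋ i] TE φ X B :=
  lin φ (fun n => (Ext.mk₀ f).postcomp X (add_zero n)) (by
    intro i n h x
    exact Ext.comp_assoc_of_third_deg_zero _ _ _ _)

theorem comm0 {A B : ModuleCat.{0} Λ} (f : A ⟶ B) (i : ℕ) (h : ℋ i) :
    (Ext.mk₀ f).comp (φ B i h) (zero_add i) = (φ A i h).comp (Ext.mk₀ f) (add_zero i) := by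
  have e := IsOps.comm (φ := φ) A B 0 i h (Ext.mk₀ f)
  have e2 : ∀ (j : ℕ) (hj : 0 + i = j) (hj' : i + 0 = j),
      (Ext.mk₀ f).comp (φ B i h) hj = (φ A i h).comp (Ext.mk₀ f) hj' := by
    rintro j rfl hj'
    exact e
  exact e2 i _ _

/-- Precomposition. -/
def pre (Y : ModuleCat.{0} Λ) {A B : ModuleCat.{0} Λ} (f : A ⟶ B) :
    TE φ B Y →ₗ[⨁ i, ℋ i] TE φ A Y :=
  lin φ (fun n => (Ext.mk₀ f).precomp Y (zero_add n)) (by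
    intro i n h x
    change (Ext.mk₀ f).comp ((φ B i h).comp x rfl) (zero_add (i + n)) =
      (φ A i h).comp ((Ext.mk₀ f).comp x (zero_add n)) rfl
    rw [← Ext.comp_assoc (Ext.mk₀ f) (φ B i h) x (zero_add i) rfl (by omega),
      ← Ext.comp_assoc (φ A i h) (Ext.mk₀ f) x (add_zero i) (zero_add n) (by omega),
      comm0])

theorem ker_le_lin {A A' B B' C C' : ModuleCat.{0} Λ}
    (f : ∀ n, Ext A A' n →+ Ext B B' n) (hf) (g : ∀ n, Ext B B' n →+ Ext C C' n) (hg)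
    (hfg : ∀ n x, g n x = 0 → ∃ y, f n y = x) :
    LinearMap.ker (lin φ g hg) ≤ LinearMap.range (lin φ f hf) := by
  classical
  intro x hx
  rw [← DirectSum.sum_support_of x]
  refine sum_mem fun n _ => ?_
  have h0 : g n (x n) = 0 := by
    rw [← lin_apply φ g hg, LinearMap.mem_ker.1 hx]; rfl
  obtain ⟨y, hy⟩ := hfg n _ h0
  exact ⟨DirectSum.of (EE φ A A') n y, by rw [lin_of, hy]⟩

theorem lin_surj {A A' B B' : ModuleCat.{0} Λ}
    (f : ∀ n, Ext A A' n →+ Ext B B' n) (hf) (h : ∀ n x, ∃ y, f n y = x) :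
    Function.Surjective (lin φ f hf) := by
  intro x
  induction x using DirectSum.induction_on with
  | zero => exact ⟨0, map_zero _⟩
  | add a b ha hb =>
    obtain ⟨a', rfl⟩ := ha
    obtain ⟨b', rfl⟩ := hb
    exact ⟨a' + b', map_add _ _ _⟩
  | of n x =>
    obtain ⟨y, hy⟩ := h n x
    exact ⟨DirectSum.of (EE φ A A') n y, by rw [lin_of, hy]⟩

/-- Finiteness of total Ext. -/
abbrev Fin' (M M' : ModuleCat.{0} Λ) : Prop := Module.Finite (⨁ i, ℋ i) (TE φ M M')

theorem retract_left {S T : ModuleCat.{0} Λ} (i : S ⟶ T) (r : T ⟶ S) (h : i ≫ r = 𝟙 S)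
    (X : ModuleCat.{0} Λ) (hT : Fin' φ T X) : Fin' φ S X := by
  refine Module.Finite.of_surjective (pre φ X i) (lin_surj φ _ _ ?_)
  intro n x
  refine ⟨(Ext.mk₀ r).comp x (zero_add n), ?_⟩
  change (Ext.mk₀ i).comp ((Ext.mk₀ r).comp x (zero_add n)) (zero_add n) = x
  rw [Ext.mk₀_comp_mk₀_assoc, h, Ext.mk₀_id_comp]

theorem retract_right {S T : ModuleCat.{0} Λ} (i : S ⟶ T) (r : T ⟶ S) (h : i ≫ r = 𝟙 S)
    (X : ModuleCat.{0} Λ) (hT : Fin' φ X T) : Fin' φ X S := by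
  refine Module.Finite.of_surjective (post φ X r) (lin_surj φ _ _ ?_)
  intro n x
  refine ⟨x.comp (Ext.mk₀ i) (add_zero n), ?_⟩
  change (x.comp (Ext.mk₀ i) (add_zero n)).comp (Ext.mk₀ r) (add_zero n) = x
  rw [Ext.comp_assoc_of_third_deg_zero, Ext.mk₀_comp_mk₀, h, Ext.comp_mk₀_id]

theorem ext_right [IsNoetherianRing H] {S : ShortComplex (ModuleCat.{0} Λ)} (hS : S.ShortExact)
    (X : ModuleCat.{0} Λ) (h1 : Fin' φ X S.X₁) (h3 : Fin' φ X S.X₃) : Fin' φ X S.X₂ :=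
  finite_mid φ noeth (post φ X S.f) (post φ X S.g) (ker_le_lin φ _ _ _ _ fun _ x hx =>
    Ext.covariant_sequence_exact₂ X hS x hx) h1 h3

theorem ext_left [IsNoetherianRing H] {S : ShortComplex (ModuleCat.{0} Λ)} (hS : S.ShortExact)
    (X : ModuleCat.{0} Λ) (h1 : Fin' φ S.X₁ X) (h3 : Fin' φ S.X₃ X) : Fin' φ S.X₂ X :=
  finite_mid φ noeth (pre φ X S.g) (pre φ X S.f) (ker_le_lin φ _ _ _ _ fun _ x hx =>
    Ext.contravariant_sequence_exact₂ hS X x hx) h3 h1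

/-- The devissage principle. -/
theorem devissage {Λ : Type} [Ring Λ] [IsArtinianRing Λ] (P : ModuleCat.{0} Λ → Prop)
    (hJ : P (ModuleCat.of Λ (Λ ⧸ (Ideal.jacobson (⊥ : Ideal Λ)))))
    (hr : ∀ {S T : ModuleCat.{0} Λ} (i : S ⟶ T) (r : T ⟶ S), i ≫ r = 𝟙 S → P T → P S)
    (he : ∀ {S : ShortComplex (ModuleCat.{0} Λ)}, S.ShortExact → P S.X₁ → P S.X₃ → P S.X₂)
    (M : ModuleCat.{0} Λ) [Module.Finite Λ M] : P M := by
  have hfl : IsFiniteLength Λ M :=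
    isFiniteLength_iff_isNoetherian_isArtinian.2 ⟨inferInstance, inferInstance⟩
  rw [Ideal.jacobson_bot] at hJ
  have hss : IsSemisimpleModule Λ (Λ ⧸ Ring.jacobson Λ) :=
    (IsArtinian.isSemisimpleModule_iff_jacobson Λ _).2 (Module.jacobson_quotient_jacobson Λ Λ)
  have hsimple : ∀ (S : Type) [AddCommGroup S] [Module Λ S] [IsSimpleModule Λ S],
      P (ModuleCat.of Λ S) := by
    intro S _ _ _
    have := IsSimpleModule.nontrivial Λ S
    obtain ⟨m, hm⟩ := exists_ne (0 : S)
    let f : (Λ ⧸ Ring.jacobson Λ) →ₗ[Λ] S :=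
      Submodule.liftQ _ (LinearMap.toSpanSingleton Λ S m)
        (IsSemisimpleModule.jacobson_le_ker Λ Λ Λ S _)
    have hf : Function.Surjective f := by
      intro y
      obtain ⟨a, ha⟩ := IsSimpleModule.toSpanSingleton_surjective Λ hm y
      exact ⟨Submodule.Quotient.mk a, ha⟩
    obtain ⟨i, hi⟩ := IsSemisimpleModule.lifting_property f hf LinearMap.id
    refine hr (ModuleCat.ofHom i) (ModuleCat.ofHom f) ?_ hJ
    rw [← ModuleCat.ofHom_comp, hi]; rfl
  have key : ∀ (N : Type) [AddCommGroup N] [Module Λ N], IsFiniteLength Λ N →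
      P (ModuleCat.of Λ N) := by
    intro N _ _ hN
    induction hN with
    | of_subsingleton =>
      refine hr 0 0 ?_ hJ
      ext x
      exact Subsingleton.elim _ _
    | @of_simple_quotient M _ _ N _ _ ih =>
      refine he (S := ShortComplex.mk (ModuleCat.ofHom N.subtype) (ModuleCat.ofHom N.mkQ)
        (by ext x; simp)) ?_ ih (hsimple _)
      refine ModuleCat.shortComplex_shortExact _ ?_ ?_ ?_
      · exact LinearMap.exact_subtype_mkQ N
      · exact N.subtype_injective
      · exact N.mkQ_surjective
  exact key M hfl

end CohAux

/-- Let `Λ` be a finite dimensional `k`-algebra and `H` a commutative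
Noetherian (ℕ-graded, of finite type) ring of cohomology operators for `Λ`: for every
`M` there is a graded ring morphism `φ_M : H → Ext^*_Λ(M,M)`, and the two induced
`H`-actions on `Ext^*_Λ(M,M')` coincide.  Then `Ext^*_Λ(M,M')` is a finitely generated
`H`-module for all finitely generated `Λ`-modules `M, M'` if and only if
`Ext^*_Λ(Λ/Rad Λ, Λ/Rad Λ)` is a finitely generated `H`-module. -/
theorem stmt19 [FiniteDimensional k Λ]
    [GradedAlgebra ℋ] [IsNoetherianRing H]
    (hft : ∀ i, FiniteDimensional k (ℋ i))
    -- `φ_M` is a morphism of graded rings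
    (hφone : ∀ (M : ModuleCat.{0} Λ) (h1 : (1 : H) ∈ ℋ 0),
      φ M 0 ⟨1, h1⟩ = Ext.mk₀ (𝟙 M))
    (hφmul : ∀ (M : ModuleCat.{0} Λ) (i j : ℕ) (x y : H) (hx : x ∈ ℋ i) (hy : y ∈ ℋ j)
      (hxy : x * y ∈ ℋ (i + j)),
      φ M (i + j) ⟨x * y, hxy⟩ = (φ M i ⟨x, hx⟩).comp (φ M j ⟨y, hy⟩) rfl)
    -- the two induced `H`-module structures on `Ext^*_Λ(M,M')` coincide
    (hφcomm : ∀ (M M' : ModuleCat.{0} Λ) (n i : ℕ) (h : ℋ i) (x : Ext M M' n),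
      x.comp (φ M' i h) rfl = (φ M i h).comp x (Nat.add_comm i n)) :
    (∀ M M' : ModuleCat.{0} Λ, Module.Finite Λ M → Module.Finite Λ M' →
        ExtFGOver k Λ H ℋ φ M M') ↔
      ExtFGOver k Λ H ℋ φ
        (ModuleCat.of Λ (Λ ⧸ (Ideal.jacobson (⊥ : Ideal Λ))))
        (ModuleCat.of Λ (Λ ⧸ (Ideal.jacobson (⊥ : Ideal Λ)))) := by
  have : CohAux.IsOps k Λ H ℋ φ := ⟨hφone, hφmul, hφcomm⟩
  have : IsArtinianRing Λ := isArtinian_of_tower k inferInstance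
  constructor
  · intro h
    exact h _ _ inferInstance inferInstance
  · intro h M M' hM hM'
    have h0 := CohAux.finite_of_fg φ h
    have h1 : CohAux.Fin' φ M M' := by
      refine CohAux.devissage (fun X => CohAux.Fin' φ X M') ?_
        (fun i r hir hT => CohAux.retract_left φ i r hir _ hT)
        (fun hS a b => CohAux.ext_left φ hS _ a b) M
      exact CohAux.devissage (fun Y => CohAux.Fin' φ _ Y) h0
        (fun i r hir hT => CohAux.retract_right φ i r hir _ hT)
        (fun hS a b => CohAux.ext_right φ hS _ a b) M'
    exact CohAux.fg_of_finite φ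
end
end
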